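/- arXiv:2209.15607 — 3 statements merged into one kernel-verified Lean document; each statement's English description precedes it below -/
import Mathlib

section
/- Let μ be a centered, compactly supported Borel probability measure on ℝ that is not a Dirac mass. Then there exists a finite Borel measure μ̂ on ℝ such that for every ω ∈ ℂ⁺ one has F_μ(ω) − ω = ∫_ℝ (x − ω)⁻¹ dμ̂(x), and moreover μ̂(ℝ) = ∫_ℝ x² dμ(x), which is strictly positive and finite. -/
open MeasureTheory Complex Set Filter Topology

noncomputable section

/-- Cauchy–Stieltjes transform `m_μ(z) = ∫ (x − z)⁻¹ dμ(x)`. -/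
def mTr (μ : Measure ℝ) (z : ℂ) : ℂ := ∫ x, ((x : ℂ) - z)⁻¹ ∂μ

/-- Negative reciprocal Cauchy–Stieltjes transform `F_μ(z) = −1/m_μ(z)`. -/
def FTr (μ : Measure ℝ) (z : ℂ) : ℂ := -(mTr μ z)⁻¹

/-- `I_ν(ω) = ∫ |x − ω|⁻² dν(x)`. -/
def Inu (ν : Measure ℝ) (ω : ℂ) : ℝ := ∫ x, (Complex.normSq ((x : ℂ) - ω))⁻¹ ∂ν

/-- Topological support of a Borel measure on ℝ. -/
def msupport (μ : Measure ℝ) : Set ℝ := {x | ∀ U : Set ℝ, IsOpen U → x ∈ U → 0 < μ U}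

/-- `μh` is a Nevanlinna measure for the (centered) measure `μ`:
a finite Borel measure with `F_μ(ω) − ω = ∫ (x − ω)⁻¹ dμh(x)` on ℂ⁺. -/
def IsNevanlinna (μ μh : Measure ℝ) : Prop :=
  IsFiniteMeasure μh ∧ ∀ ω : ℂ, 0 < ω.im → FTr μ ω - ω = ∫ x, ((x : ℂ) - ω)⁻¹ ∂μh

/-- Subordination function for `μ` at time `t`. -/
structure IsSubordination (μ : Measure ℝ) (t : ℝ) (ω : ℂ → ℂ) : Prop where
  contOn : ContinuousOn ω {z : ℂ | 0 ≤ z.im}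
  mapsTo : ∀ z : ℂ, 0 ≤ z.im → 0 ≤ (ω z).im
  diff : DifferentiableOn ℂ ω {z : ℂ | 0 < z.im}
  im_ge : ∀ z : ℂ, 0 < z.im → z.im ≤ (ω z).im
  subord : ∀ z : ℂ, 0 < z.im → (t : ℂ) * ω z - z = ((t - 1 : ℝ) : ℂ) * FTr μ (ω z)

/-- `ν = μ^{⊞t}`, the free convolution power associated with the subordination function `ω`. -/
def IsFreePower (μ : Measure ℝ) (t : ℝ) (ω : ℂ → ℂ) (ν : Measure ℝ) : Prop :=
  IsProbabilityMeasure ν ∧ ∀ z : ℂ, 0 < z.im → mTr ν z = mTr μ (ω z)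

/-- Subordination functions for the pair `(μa, μb)`. -/
structure IsPairSubordination (μa μb : Measure ℝ) (ωa ωb : ℂ → ℂ) : Prop where
  diff_a : DifferentiableOn ℂ ωa {z : ℂ | 0 < z.im}
  diff_b : DifferentiableOn ℂ ωb {z : ℂ | 0 < z.im}
  im_a : ∀ z : ℂ, 0 < z.im → z.im ≤ (ωa z).im
  im_b : ∀ z : ℂ, 0 < z.im → z.im ≤ (ωb z).im
  lim_a : Tendsto (fun η : ℝ => ωa (η * Complex.I) / (η * Complex.I)) atTop (nhds 1)
  lim_b : Tendsto (fun η : ℝ => ωb (η * Complex.I) / (η * Complex.I)) atTop (nhds 1)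
  eq_a : ∀ z : ℂ, 0 < z.im → ωa z + ωb z - z = FTr μa (ωb z)
  eq_b : ∀ z : ℂ, 0 < z.im → ωa z + ωb z - z = FTr μb (ωa z)

/-- `ν = μa ⊞ μb`, the free additive convolution. -/
def IsFreeConv (μa μb : Measure ℝ) (ωb : ℂ → ℂ) (ν : Measure ℝ) : Prop :=
  IsProbabilityMeasure ν ∧ ∀ z : ℂ, 0 < z.im → mTr ν z = mTr μa (ωb z)

/-- Assumption 1 of the paper: `μ` is a centered, compactly supported probability
measure whose singular part consists of finitely many atoms and whose absolutely
continuous part has a density `ρ` of Jacobi type, supported on finitely many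
disjoint compact intervals with power-law behavior (exponents in `(−1,1)`). -/
structure JacobiData (μ : Measure ℝ) where
  ρ : ℝ → ℝ
  n : ℕ
  npos : 0 < n
  Em : Fin n → ℝ
  Ep : Fin n → ℝ
  βm : Fin n → ℝ
  βp : Fin n → ℝ
  Cj : Fin n → ℝ
  atoms : Finset ℝ
  w : ℝ → ℝ
  prob : IsProbabilityMeasure μ
  compactSupp : ∃ K : Set ℝ, IsCompact K ∧ μ Kᶜ = 0
  centered : ∫ x, x ∂μ = 0
  lt : ∀ j, Em j < Ep j
  disj : ∀ i j, i ≠ j → Disjoint (Set.Icc (Em i) (Ep i)) (Set.Icc (Em j) (Ep j))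
  βm_mem : ∀ j, βm j ∈ Set.Ioo (-1 : ℝ) 1
  βp_mem : ∀ j, βp j ∈ Set.Ioo (-1 : ℝ) 1
  Cj_ge : ∀ j, 1 ≤ Cj j
  ρ_nonneg : ∀ x, 0 ≤ ρ x
  ρ_supp : ∀ x, x ∉ ⋃ j, Set.Icc (Em j) (Ep j) → ρ x = 0
  powerLaw : ∀ j, ∀ᵐ E ∂(volume.restrict (Set.Icc (Em j) (Ep j))),
      (Cj j)⁻¹ * ((E - Em j) ^ (βm j) * (Ep j - E) ^ (βp j)) ≤ ρ E ∧
      ρ E ≤ Cj j * ((E - Em j) ^ (βm j) * (Ep j - E) ^ (βp j))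
  w_nonneg : ∀ a, 0 ≤ w a
  decomp : μ = volume.withDensity (fun x => ENNReal.ofReal (ρ x))
      + ∑ a ∈ atoms, ENNReal.ofReal (w a) • Measure.dirac a

/-- The support of the absolutely continuous part of `μ`. -/
def JacobiData.acSupport {μ : Measure ℝ} (d : JacobiData μ) : Set ℝ :=
  ⋃ j, Set.Icc (d.Em j) (d.Ep j)

/-- The Hölder condition (5.1)/(2.8) of the paper on the density of `μ_ac`. -/
def JacobiData.HolderCond {μ : Measure ℝ} (d : JacobiData μ) : Prop :=
  ∀ j, ∃ L γ : NNReal, 0 < γ ∧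
    HolderOnWith L γ
      (fun E => d.ρ E / ((E - d.Em j) ^ (d.βm j) * (d.Ep j - E) ^ (d.βp j)))
      (Set.Icc (d.Em j) (d.Ep j))

/-- Assumption 2 of the paper: a centered, absolutely continuous probability measure
supported on finitely many disjoint compact intervals, with density of Jacobi type. -/
structure AbsJacobiData (μ : Measure ℝ) where
  ρ : ℝ → ℝ
  n : ℕ
  npos : 0 < n
  Am : Fin n → ℝ
  Ap : Fin n → ℝ
  sm : Fin n → ℝ
  sp : Fin n → ℝ
  Cj : Fin n → ℝ
  prob : IsProbabilityMeasure μ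
  centered : ∫ x, x ∂μ = 0
  lt : ∀ j, Am j < Ap j
  disj : ∀ i j, i ≠ j → Disjoint (Set.Icc (Am i) (Ap i)) (Set.Icc (Am j) (Ap j))
  sm_mem : ∀ j, sm j ∈ Set.Ioo (-1 : ℝ) 1
  sp_mem : ∀ j, sp j ∈ Set.Ioo (-1 : ℝ) 1
  Cj_ge : ∀ j, 1 ≤ Cj j
  ρ_nonneg : ∀ x, 0 ≤ ρ x
  ρ_supp : ∀ x, x ∉ ⋃ j, Set.Icc (Am j) (Ap j) → ρ x = 0
  powerLaw : ∀ j, ∀ᵐ E ∂(volume.restrict (Set.Icc (Am j) (Ap j))),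
      (Cj j)⁻¹ * ((E - Am j) ^ (sm j) * (Ap j - E) ^ (sp j)) ≤ ρ E ∧
      ρ E ≤ Cj j * ((E - Am j) ^ (sm j) * (Ap j - E) ^ (sp j))
  decomp : μ = volume.withDensity (fun x => ENNReal.ofReal (ρ x))

/-!
For a bounded random variable `g` with law `μ`, `-m_μ(ω)` is the matrix coefficient at the constant
function `1` of the resolvent at `ω` of multiplication by `g` on `L²`. By the Schur complement
formula for the splitting `L² = ℂ·1 ⊕ 1^⊥`, the reciprocal of this coefficient is `ω - E[g]` minus
the matrix coefficient, at the component `g - E[g]` of `g` in `1^⊥`, of the resolvent of the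
compression to `1^⊥`. The latter is minus the Cauchy–Stieltjes transform of the spectral measure of
the compression at `g - E[g]`, whose total mass is `‖g - E[g]‖² = Var[g]`.
-/

open ProbabilityTheory
open scoped CompactlySupported InnerProductSpace ENNReal

section Resolvent

variable {A : Type*} [CStarAlgebra A] {a : A} {ω : ℂ}

lemma mem_resolventSet_of_isSelfAdjoint (ha : IsSelfAdjoint a) (hω : ω.im ≠ 0) :
    ω ∈ resolventSet ℂ a :=
  spectrum.notMem_iff.mp fun h ↦ hω (ha.im_eq_zero_of_mem_spectrum h)

lemma resolvent_eq_cfc [IsStarNormal a] (hω : ω ∈ resolventSet ℂ a) :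
    resolvent a ω = cfc (fun z ↦ (ω - z)⁻¹) a := by
  have sub_ne_zero : ∀ z ∈ spectrum ℂ a, ω - z ≠ 0 := fun z hz h ↦
    spectrum.notMem_iff.mpr hω (sub_eq_zero.mp h ▸ hz)
  rw [cfc_inv _ a sub_ne_zero, cfc_sub .., cfc_const .., cfc_id' ℂ a, resolvent]

end Resolvent

section Schur

variable {𝕜 H : Type*} [RCLike 𝕜] [NormedAddCommGroup H] [InnerProductSpace 𝕜 H]

/-- The compression of `T` to `U`, encoded as the operator `P T P` on the whole space, with `P` the
orthogonal projection onto `U`, so that it vanishes on `Uᗮ`. -/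
def compression (U : Submodule 𝕜 H) [U.HasOrthogonalProjection] (T : H →L[𝕜] H) : H →L[𝕜] H :=
  U.starProjection ∘L T ∘L U.starProjection

lemma isSelfAdjoint_compression [CompleteSpace H] {T : H →L[𝕜] H} (hT : IsSelfAdjoint T)
    (U : Submodule 𝕜 H) [U.HasOrthogonalProjection] : IsSelfAdjoint (compression U T) :=
  hT.conj_starProjection U

lemma smul_resolvent_apply_sub {T : H →L[𝕜] H} {z : 𝕜} (hz : z ∈ resolventSet 𝕜 T) (x : H) :
    z • resolvent T z x - T (resolvent T z x) = x := by
  have h : (algebraMap 𝕜 _ z - T) * resolvent T z = 1 := Ring.mul_inverse_cancel _ hz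
  simpa [Algebra.algebraMap_eq_smul_one] using congr($h x)

lemma resolvent_apply_smul_sub {T : H →L[𝕜] H} {z : 𝕜} (hz : z ∈ resolventSet 𝕜 T) (x : H) :
    resolvent T z (z • x - T x) = x := by
  have h : resolvent T z * (algebraMap 𝕜 _ z - T) = 1 := Ring.inverse_mul_cancel _ hz
  simpa [Algebra.algebraMap_eq_smul_one] using congr($h x)

lemma starProjection_orthogonal_span_singleton {e : H} (he : ‖e‖ = 1) (x : H) :
    (𝕜 ∙ e)ᗮ.starProjection x = x - ⟪e, x⟫_𝕜 • e := by
  rw [Submodule.starProjection_orthogonal_val, Submodule.starProjection_unit_singleton 𝕜 he]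

theorem inner_resolvent_mul_schur {T : H →L[𝕜] H} (hT : (T : H →ₗ[𝕜] H).IsSymmetric) {e : H}
    (he : ‖e‖ = 1) {z : 𝕜} (hz : z ∈ resolventSet 𝕜 T)
    (hz' : z ∈ resolventSet 𝕜 (compression (𝕜 ∙ e)ᗮ T)) :
    ⟪e, resolvent T z e⟫_𝕜 * (z - ⟪e, T e⟫_𝕜 -
      ⟪(𝕜 ∙ e)ᗮ.starProjection (T e),
        resolvent (compression (𝕜 ∙ e)ᗮ T) z ((𝕜 ∙ e)ᗮ.starProjection (T e))⟫_𝕜) = 1 := by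
  set P := (𝕜 ∙ e)ᗮ.starProjection
  set B := compression (𝕜 ∙ e)ᗮ T
  set u := resolvent B z (P (T e))
  set s := z - ⟪e, T e⟫_𝕜 - ⟪P (T e), u⟫_𝕜
  have P_apply (x : H) : P x = x - ⟪e, x⟫_𝕜 • e := starProjection_orthogonal_span_singleton he x
  have P_idem (x : H) : P (P x) = P x := congr($((𝕜 ∙ e)ᗮ.isIdempotentElem_starProjection.eq) x)
  have T_Pu : T (P u) = B u + ⟪P (T e), u⟫_𝕜 • e := by
    have inner_eq : ⟪e, T (P u)⟫_𝕜 = ⟪P (T e), u⟫_𝕜 :=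
      (hT e (P u)).symm.trans (Submodule.inner_starProjection_left_eq_right _ _ _).symm
    rw [← inner_eq]
    exact sub_eq_iff_eq_add.mp (P_apply (T (P u))).symm
  have P_Bu : P (B u) = B u := P_idem _
  have smul_Pu : z • P u - B u = P (T e) := by
    have := congr(P $(smul_resolvent_apply_sub hz' (P (T e))))
    rwa [map_sub, map_smul, P_Bu, P_idem] at this
  have apply_sub : z • (e + P u) - T (e + P u) = s • e := by
    rw [map_add, smul_add, T_Pu, sub_smul, sub_smul]
    linear_combination (norm := module) smul_Pu + P_apply (T e)
  have inner_e_Pu : ⟪e, P u⟫_𝕜 = 0 :=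
    Submodule.mem_orthogonal_singleton_iff_inner_right.mp (Submodule.starProjection_apply_mem _ u)
  calc ⟪e, resolvent T z e⟫_𝕜 * s = ⟪e, resolvent T z (s • e)⟫_𝕜 := by
        rw [map_smul, inner_smul_right, mul_comm]
    _ = ⟪e, e + P u⟫_𝕜 := by rw [← apply_sub, resolvent_apply_smul_sub hz]
    _ = 1 := by rw [inner_add_right, inner_e_Pu, add_zero, inner_self_eq_norm_sq_to_K, he]; simp

end Schur

section SpectralMeasure

variable {H : Type*} [NormedAddCommGroup H] [InnerProductSpace ℂ H] [CompleteSpace H]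
  {A : H →L[ℂ] H}

/-- The functional `f ↦ ⟪b, f(A) b⟫` (a real number) on the continuous real functions on the
spectrum of `A`, to which the Riesz–Markov–Kakutani theorem is applied; on the compact spectrum all
of them have compact support. -/
def spectralFunctional (hA : IsSelfAdjoint A) (b : H) : C_c(spectrum ℝ A, ℝ) →ₚ[ℝ] ℝ :=
  PositiveLinearMap.mk₀
    { toFun f := (⟪b, cfcHom hA f.toContinuousMap b⟫_ℂ).re
      map_add' f g := by
        have : (f + g).toContinuousMap = f.toContinuousMap + g.toContinuousMap := rfl
        simp [this]
      map_smul' c f := by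
        have : (c • f).toContinuousMap = c • f.toContinuousMap := rfl
        simp [this] }
    fun f hf ↦ by
      have : 0 ≤ cfcHom hA f.toContinuousMap := (cfcHom_nonneg_iff hA).mpr hf
      exact ((ContinuousLinearMap.nonneg_iff_isPositive _).mp this).re_inner_nonneg_right b

/-- The spectral measure of the self-adjoint operator `A` at the vector `b`, as a measure on all of
`ℝ` carried by the spectrum. -/
def spectralMeasure (hA : IsSelfAdjoint A) (b : H) : Measure ℝ :=
  (RealRMK.rieszMeasure (spectralFunctional hA b)).map Subtype.val

lemma measurableEmbedding_spectrum_val (A : H →L[ℂ] H) :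
    MeasurableEmbedding (Subtype.val : spectrum ℝ A → ℝ) :=
  .subtype_coe (spectrum.isClosed A).measurableSet

namespace spectralMeasure

variable (hA : IsSelfAdjoint A) (b : H)

instance : IsFiniteMeasure (spectralMeasure hA b) := by
  have : IsFiniteMeasure (RealRMK.rieszMeasure (spectralFunctional hA b)) :=
    ⟨isCompact_univ.measure_lt_top⟩
  exact Measure.isFiniteMeasure_map _ _

lemma integrable {E : Type*} [NormedAddCommGroup E] {f : ℝ → E} (hf : Continuous f) :
    Integrable f (spectralMeasure hA b) := by
  have hf_spectrum : Continuous (f ∘ (Subtype.val : spectrum ℝ A → ℝ)) :=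
    hf.comp continuous_subtype_val
  rw [spectralMeasure, (measurableEmbedding_spectrum_val A).integrable_map_iff]
  exact hf_spectrum.integrable_of_hasCompactSupport (.of_compactSpace _)

lemma ofReal_integral_eq_inner_cfc {f : ℝ → ℝ} (hf : Continuous f) :
    ((∫ x, f x ∂spectralMeasure hA b : ℝ) : ℂ) = ⟪b, cfc f A b⟫_ℂ := by
  have integral_eq_re : ∫ x, f x ∂spectralMeasure hA b = (⟪b, cfc f A b⟫_ℂ).re := by
    rw [spectralMeasure, (measurableEmbedding_spectrum_val A).integral_map,
      cfc_apply f A hA hf.continuousOn]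
    exact RealRMK.integral_rieszMeasure _ (CompactlySupportedContinuousMap.continuousMapEquiv
      (⟨fun x ↦ f x, by fun_prop⟩ : C(spectrum ℝ A, ℝ)))
  have hsymm : IsSelfAdjoint (cfc f A) := cfc_predicate f A
  rw [integral_eq_re]
  exact hsymm.isSymmetric.coe_re_inner_self_apply b

lemma integral_eq_inner_cfc {f : ℝ → ℂ} (hf : Continuous f) :
    ∫ x, f x ∂spectralMeasure hA b = ⟪b, cfc (fun z : ℂ ↦ f z.re) A b⟫_ℂ := by
  have cfc_eq : cfc (fun z : ℂ ↦ f z.re) A =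
      cfc (fun x ↦ (f x).re) A + I • cfc (fun x ↦ (f x).im) A := by
    rw [cfc_real_eq_complex _ hA, cfc_real_eq_complex _ hA, ← cfc_smul .., ← cfc_add ..]
    simp only [smul_eq_mul, mul_comm I, re_add_im]
  rw [cfc_eq, add_apply, smul_apply, inner_add_right,
    inner_smul_right, ← ofReal_integral_eq_inner_cfc hA b (f := fun x ↦ (f x).re) (by fun_prop),
    ← ofReal_integral_eq_inner_cfc hA b (f := fun x ↦ (f x).im) (by fun_prop), mul_comm I]
  exact (integral_re_add_im (integrable hA b hf)).symm

lemma real_univ : (spectralMeasure hA b).real univ = ‖b‖ ^ 2 := by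
  have := ofReal_integral_eq_inner_cfc hA b (f := fun _ ↦ 1) continuous_const
  rw [cfc_const_one ℝ A, one_apply_eq_self, inner_self_eq_norm_sq_to_K] at this
  exact Complex.ofReal_injective (by simpa using this)

lemma mTr_eq_neg_inner_resolvent {ω : ℂ} (hω : ω.im ≠ 0) :
    mTr (spectralMeasure hA b) ω = -⟪b, resolvent A ω b⟫_ℂ := by
  have := hA.isStarNormal
  have sub_ne_zero (x : ℝ) : (x : ℂ) - ω ≠ 0 := fun h ↦ hω (by simpa using congr(($h).im))
  rw [mTr, integral_eq_inner_cfc hA b (by fun_prop (disch := exact sub_ne_zero _)),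
    resolvent_eq_cfc (mem_resolventSet_of_isSelfAdjoint hA hω), ← inner_neg_right,
    ← neg_apply, ← cfc_neg]
  congr 2
  refine cfc_congr fun z hz ↦ ?_
  rw [← hA.mem_spectrum_eq_re hz, ← inv_neg, neg_sub]

end spectralMeasure

end SpectralMeasure

section Multiplication

variable {α : Type*} [MeasurableSpace α] {μ : Measure α} {g : α → ℝ}

/-- The operator of multiplication by the essentially bounded real function `g` on the complex
space `L²(μ)`. -/
def mulL2 (hg : MemLp g ∞ μ) : Lp ℂ 2 μ →L[ℂ] Lp ℂ 2 μ :=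
  (ContinuousLinearMap.mul ℂ ℂ).holderL μ ∞ 2 2 (hg.ofReal (K := ℂ)).toLp

namespace mulL2

lemma coeFn (hg : MemLp g ∞ μ) (f : Lp ℂ 2 μ) :
    mulL2 hg f =ᵐ[μ] fun x ↦ (g x : ℂ) * f x := by
  have holder_ae : mulL2 hg f =ᵐ[μ] _ := (ContinuousLinearMap.mul ℂ ℂ).coeFn_holder _ f
  filter_upwards [holder_ae, (hg.ofReal (K := ℂ)).coeFn_toLp] with x hx hgx
  rw [hx, hgx]
  rfl

lemma isSelfAdjoint (hg : MemLp g ∞ μ) : IsSelfAdjoint (mulL2 hg) := by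
  refine LinearMap.IsSymmetric.isSelfAdjoint fun f₁ f₂ ↦ ?_
  rw [L2.inner_def, L2.inner_def]
  refine integral_congr_ae ?_
  filter_upwards [coeFn hg f₁, coeFn hg f₂] with x h₁ h₂
  change ⟪mulL2 hg f₁ x, f₂ x⟫_ℂ = ⟪f₁ x, mulL2 hg f₂ x⟫_ℂ
  simp only [h₁, h₂, RCLike.inner_apply, map_mul, conj_ofReal]
  ring

lemma coeFn_resolvent (hg : MemLp g ∞ μ) {ω : ℂ} (hω : ω.im ≠ 0) (f : Lp ℂ 2 μ) :
    resolvent (mulL2 hg) ω f =ᵐ[μ] fun x ↦ (ω - g x)⁻¹ * f x := by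
  set u := resolvent (mulL2 hg) ω f
  have hω_mem : ω ∈ resolventSet ℂ (mulL2 hg) :=
    mem_resolventSet_of_isSelfAdjoint (isSelfAdjoint hg) hω
  have hu : ω • u - mulL2 hg u = f := smul_resolvent_apply_sub hω_mem f
  filter_upwards [Lp.coeFn_sub (ω • u) (mulL2 hg u), Lp.coeFn_smul ω u, coeFn hg u]
    with x h_sub h_smul h_mul
  have sub_ne_zero : ω - g x ≠ 0 := fun h ↦ hω (by simpa using congr(($h).im))
  rw [eq_inv_mul_iff_mul_eq₀ sub_ne_zero, ← hu, h_sub, Pi.sub_apply, h_smul, h_mul,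
    Pi.smul_apply, smul_eq_mul, sub_mul]

end mulL2

lemma inner_Lp_const_one_left [IsFiniteMeasure μ] (f : Lp ℂ 2 μ) :
    ⟪Lp.const 2 μ (1 : ℂ), f⟫_ℂ = ∫ x, f x ∂μ := by
  rw [← indicatorConstLp_univ, L2.inner_indicatorConstLp_one, setIntegral_univ]

lemma norm_Lp_const_one [IsProbabilityMeasure μ] : ‖Lp.const 2 μ (1 : ℂ)‖ = 1 := by
  simp [Lp.norm_const]

namespace mulL2

lemma coeFn_const_one [IsFiniteMeasure μ] (hg : MemLp g ∞ μ) :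
    mulL2 hg (Lp.const 2 μ 1) =ᵐ[μ] fun x ↦ (g x : ℂ) := by
  filter_upwards [coeFn hg (Lp.const 2 μ 1), Lp.coeFn_const 2 μ (1 : ℂ)] with x hx h_one
  rw [hx, h_one, Function.const_apply, mul_one]

lemma inner_const_one [IsFiniteMeasure μ] (hg : MemLp g ∞ μ) :
    ⟪Lp.const 2 μ 1, mulL2 hg (Lp.const 2 μ 1)⟫_ℂ = (∫ x, g x ∂μ : ℝ) := by
  rw [inner_Lp_const_one_left, integral_congr_ae (coeFn_const_one hg), integral_complex_ofReal]

lemma inner_resolvent_const_one [IsFiniteMeasure μ] (hg : MemLp g ∞ μ) {ω : ℂ} (hω : ω.im ≠ 0) :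
    ⟪Lp.const 2 μ 1, resolvent (mulL2 hg) ω (Lp.const 2 μ 1)⟫_ℂ = -mTr (μ.map g) ω := by
  rw [inner_Lp_const_one_left, mTr, integral_map hg.aestronglyMeasurable.aemeasurable (by fun_prop),
    ← integral_neg]
  refine integral_congr_ae ?_
  filter_upwards [coeFn_resolvent hg hω (Lp.const 2 μ 1), Lp.coeFn_const 2 μ (1 : ℂ)]
    with x hx h_one
  rw [hx, h_one, Function.const_apply, mul_one, ← inv_neg, neg_sub]

lemma norm_sq_starProjection_const_one [IsProbabilityMeasure μ] (hg : MemLp g ∞ μ) :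
    ‖(ℂ ∙ Lp.const 2 μ (1 : ℂ))ᗮ.starProjection (mulL2 hg (Lp.const 2 μ 1))‖ ^ 2 = Var[g; μ] := by
  set v := (ℂ ∙ Lp.const 2 μ (1 : ℂ))ᗮ.starProjection (mulL2 hg (Lp.const 2 μ 1)) with hv
  have v_ae : v =ᵐ[μ] fun x ↦ ((g x - μ[g] : ℝ) : ℂ) := by
    rw [hv, starProjection_orthogonal_span_singleton norm_Lp_const_one, inner_const_one]
    filter_upwards [Lp.coeFn_sub (mulL2 hg (Lp.const 2 μ 1)) (((μ[g] : ℝ) : ℂ) • Lp.const 2 μ 1),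
      Lp.coeFn_smul ((μ[g] : ℝ) : ℂ) (Lp.const 2 μ (1 : ℂ)), coeFn_const_one hg,
      Lp.coeFn_const 2 μ (1 : ℂ)] with x h_sub h_smul h_mul h_one
    rw [h_sub, Pi.sub_apply, h_smul, Pi.smul_apply, h_mul, h_one]
    simp
  have : ((‖v‖ ^ 2 : ℝ) : ℂ) = (Var[g; μ] : ℝ) := by
    rw [variance_eq_integral hg.aestronglyMeasurable.aemeasurable, ← integral_complex_ofReal,
      ofReal_pow, ← coe_algebraMap, ← inner_self_eq_norm_sq_to_K (𝕜 := ℂ), L2.inner_def]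
    refine integral_congr_ae ?_
    filter_upwards [v_ae] with x hx
    rw [hx, RCLike.inner_apply, conj_ofReal, coe_algebraMap, ofReal_pow, sq]
  exact ofReal_injective this

end mulL2

theorem exists_FTr_map_sub_add [IsProbabilityMeasure μ] (hg : MemLp g ∞ μ) :
    ∃ ν : Measure ℝ, IsFiniteMeasure ν ∧ ν.real univ = Var[g; μ] ∧
      ∀ ω : ℂ, ω.im ≠ 0 → FTr (μ.map g) ω - ω + (μ[g] : ℝ) = mTr ν ω := by
  let e := Lp.const 2 μ (1 : ℂ)
  have hM := mulL2.isSelfAdjoint hg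
  have hB := isSelfAdjoint_compression hM (ℂ ∙ e)ᗮ
  refine ⟨spectralMeasure hB ((ℂ ∙ e)ᗮ.starProjection (mulL2 hg e)), inferInstance, ?_,
    fun ω hω ↦ ?_⟩
  · rw [spectralMeasure.real_univ, mulL2.norm_sq_starProjection_const_one]
  · have schur := inner_resolvent_mul_schur hM.isSymmetric norm_Lp_const_one
      (mem_resolventSet_of_isSelfAdjoint hM hω) (mem_resolventSet_of_isSelfAdjoint hB hω)
    rw [mulL2.inner_resolvent_const_one hg hω, mulL2.inner_const_one] at schur
    rw [spectralMeasure.mTr_eq_neg_inner_resolvent hB _ hω, FTr, ← inv_neg,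
      inv_eq_of_mul_eq_one_right schur]
    ring

end Multiplication

lemma memLp_top_of_isCompact {X E : Type*} [TopologicalSpace X] [MeasurableSpace X]
    [OpensMeasurableSpace X] [NormedAddCommGroup E] [SecondCountableTopologyEither X E]
    {μ : Measure X} {K : Set X} (hK : IsCompact K) (hKμ : μ Kᶜ = 0) {f : X → E}
    (hf : Continuous f) : MemLp f ∞ μ := by
  obtain ⟨C, hC⟩ := hK.exists_bound_of_continuousOn hf.continuousOn
  have ae_mem : ∀ᵐ x ∂μ, x ∈ K := hKμ
  exact memLp_top_of_bound hf.aestronglyMeasurable C (ae_mem.mono hC)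

lemma eq_dirac_of_variance_id_eq_zero {μ : Measure ℝ} [IsProbabilityMeasure μ]
    (hμ : MemLp id 2 μ) (h : Var[id; μ] = 0) : μ = Measure.dirac μ[id] := by
  simpa [Measure.map_const] using
    Measure.map_congr (f := id) (ae_eq_integral_of_variance_eq_zero hμ h)

theorem statement0_general (μ : Measure ℝ) [IsProbabilityMeasure μ]
    (hcpt : ∃ K : Set ℝ, IsCompact K ∧ μ Kᶜ = 0) (hnd : ∀ a : ℝ, μ ≠ Measure.dirac a) :
    ∃ μh : Measure ℝ, IsFiniteMeasure μh ∧
      (∀ ω : ℂ, ω.im ≠ 0 →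
        FTr μ ω - ω + (∫ x, x ∂μ : ℝ) = ∫ x, ((x : ℂ) - ω)⁻¹ ∂μh) ∧
      μh.real univ = Var[id; μ] ∧ 0 < Var[id; μ] := by
  obtain ⟨K, hK, hKμ⟩ := hcpt
  have hid : MemLp (id : ℝ → ℝ) ∞ μ := memLp_top_of_isCompact hK hKμ continuous_id
  obtain ⟨ν, hν, hmass, hF⟩ := exists_FTr_map_sub_add hid
  rw [Measure.map_id] at hF
  exact ⟨ν, hν, hF, hmass, (variance_nonneg _ _).lt_of_ne' fun h ↦
    hnd _ (eq_dirac_of_variance_id_eq_zero (hid.mono_exponent le_top) h)⟩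

/-- existence of the Nevanlinna measure `μ̂` with total mass the second
moment of `μ`, which is strictly positive and finite. -/
theorem statement0 (μ : Measure ℝ) (hprob : IsProbabilityMeasure μ)
    (hcpt : ∃ K : Set ℝ, IsCompact K ∧ μ Kᶜ = 0)
    (hcent : ∫ x, x ∂μ = 0)
    (hnd : ∀ a : ℝ, μ ≠ Measure.dirac a) :
    ∃ μh : Measure ℝ, IsFiniteMeasure μh ∧
      (∀ ω : ℂ, 0 < ω.im → FTr μ ω - ω = ∫ x, ((x : ℂ) - ω)⁻¹ ∂μh) ∧
      (μh Set.univ).toReal = ∫ x, x ^ 2 ∂μ ∧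
      0 < ∫ x, x ^ 2 ∂μ := by
  obtain ⟨μh, hfin, hF, hmass, hpos⟩ := statement0_general μ hcpt hnd
  rw [variance_of_integral_eq_zero aemeasurable_id hcent] at hmass hpos
  exact ⟨μh, hfin, fun ω hω ↦ by simpa [hcent] using hF ω hω.ne', hmass, hpos⟩

end
end

section
/- Let μ be a centered, compactly supported Borel probability measure on ℝ that is not a Dirac mass, μ̂ a Nevanlinna measure for μ, t > 1, and ω_t a subordination function for μ at time t. Let z₀ ∈ ℂ⁺ ∪ ℝ. If either (i) Im ω_t(z₀) > 0, or (ii) ω_t(z₀) ∈ ℝ with dist(ω_t(z₀), supp μ̂) > 0 and I_{μ̂}(ω_t(z₀)) < 1/(t − 1), then there exist an open disc D ⊆ ℂ centered at z₀ and an analytic function g : D → ℂ with g = ω_t on D ∩ (ℂ⁺ ∪ ℝ). -/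
open MeasureTheory Complex Set Filter Topology

noncomputable section

/-!
With `ν = μ̂` and `c = t - 1`, the subordination equation says that `Z ω := ω - c m_ν(ω)` is a left
inverse of `ω_t` on the upper half-plane, hence by continuity at every point of the closed
half-plane where `ω_t` avoids `supp ν`. Off `supp ν` the map `Z` is analytic with derivative
`Z' ω = 1 - c ∫ (x - ω)⁻² dν`, so by the inverse function theorem it suffices that
`Z' (ω_t z₀) ≠ 0`. Since `Re (x - ω)⁻² ≤ |x - ω|⁻²`, this holds whenever `c I_ν(ω) < 1`. When
`Im ω > 0`, the bound `0 ≤ Im Z(ω) = (1 - c I_ν(ω)) Im ω` only gives `c I_ν(ω) ≤ 1`, but the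
inequality between the integrands is then strict.
-/

section LocalInverse

variable {𝕜 : Type*} [NontriviallyNormedField 𝕜]

theorem exists_analyticAt_eventuallyEq_of_eventually_leftInverse [CompleteSpace 𝕜] [CharZero 𝕜]
    {f ω : 𝕜 → 𝕜} {s : Set 𝕜} {z₀ : 𝕜}
    (hf : AnalyticAt 𝕜 f (ω z₀)) (hf' : deriv f (ω z₀) ≠ 0) (hz₀ : z₀ ∈ s)
    (hω : ContinuousWithinAt ω s z₀) (hfω : ∀ᶠ z in 𝓝[s] z₀, f (ω z) = z) :
    ∃ g : 𝕜 → 𝕜, AnalyticAt 𝕜 g z₀ ∧ g =ᶠ[𝓝[s] z₀] ω := by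
  have hg := hf.analyticAt_localInverse hf'
  rw [hfω.self_of_nhdsWithin hz₀] at hg
  refine ⟨_, hg, ?_⟩
  filter_upwards [hω.eventually (hf.hasStrictDerivAt.eventually_left_inverse hf'), hfω]
    with z hleft hz
  rwa [hz] at hleft

theorem exists_differentiableOn_ball_eqOn_of_analyticAt {E F : Type*}
    [NormedAddCommGroup E] [NormedSpace 𝕜 E] [NormedAddCommGroup F] [NormedSpace 𝕜 F]
    [CompleteSpace F] {g ω : E → F} {s : Set E} {z₀ : E}
    (hg : AnalyticAt 𝕜 g z₀) (hgω : g =ᶠ[𝓝[s] z₀] ω) :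
    ∃ r > 0, DifferentiableOn 𝕜 g (Metric.ball z₀ r) ∧ EqOn g ω (Metric.ball z₀ r ∩ s) := by
  obtain ⟨r, hr, hball⟩ := Metric.eventually_nhds_iff_ball.1
    (hg.eventually_analyticAt.and (eventually_nhdsWithin_iff.1 hgω))
  exact ⟨r, hr, fun z hz => (hball z hz).1.differentiableAt.differentiableWithinAt,
    fun z hz => (hball z hz.1).2 hz.2⟩

end LocalInverse

theorem re_sq_lt_norm_sq_of_im_ne_zero {a : ℂ} (ha : a.im ≠ 0) : (a ^ 2).re < ‖a ^ 2‖ := by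
  rw [norm_pow, ← normSq_eq_norm_sq, normSq_apply, sq, mul_re]
  linarith [mul_self_pos.2 ha]

theorem msupport_eq_support (ν : Measure ℝ) : msupport ν = ν.support := by
  rw [Measure.support_eq_forall_isOpen]
  ext x
  exact forall_congr' fun _ => forall_comm

theorem notMem_image_support_of_infDist_pos {ν : Measure ℝ} {w : ℂ}
    (hw : 0 < Metric.infDist w.re (msupport ν)) : w ∉ algebraMap ℝ ℂ '' ν.support := by
  rintro ⟨x, hx, rfl⟩
  rw [msupport_eq_support] at hw
  exact hw.ne' (Metric.infDist_zero_of_mem hx)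

theorem notMem_image_support_of_im_ne_zero (ν : Measure ℝ) {w : ℂ} (hw : w.im ≠ 0) :
    w ∉ algebraMap ℝ ℂ '' ν.support := by
  rintro ⟨x, -, rfl⟩
  exact hw (ofReal_im x)

theorem isOpen_compl_image_support (ν : Measure ℝ) : IsOpen (algebraMap ℝ ℂ '' ν.support)ᶜ :=
  ((algebraMap_isometry ℝ ℂ).isClosedEmbedding.isClosedMap _ Measure.isClosed_support).isOpen_compl

theorem mTr_eq_resolventTransform (ν : Measure ℝ) : mTr ν = resolventTransform ν := by
  ext w
  simp only [mTr, resolventTransform_apply, resolvent, Ring.inverse_eq_inv', coe_algebraMap]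

theorem Inu_eq_integral_norm_resolvent_sq (ν : Measure ℝ) (w : ℂ) :
    Inu ν w = ∫ x : ℝ, ‖resolvent w x ^ 2‖ ∂ν := by
  simp only [Inu, resolvent, Ring.inverse_eq_inv', coe_algebraMap, norm_pow, norm_inv, inv_pow,
    normSq_eq_norm_sq]

theorem re_integral_resolvent_sq_le_Inu (ν : Measure ℝ) (w : ℂ) :
    (∫ x : ℝ, resolvent w x ^ 2 ∂ν).re ≤ Inu ν w := by
  rw [Inu_eq_integral_norm_resolvent_sq]
  exact (re_le_norm _).trans (norm_integral_le_integral_norm _)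

/-- The map `ω ↦ ω - c m_ν(ω)`. For `ν = μ̂` and `c = t - 1` it inverts the subordination function
`ω_t` from the left. -/
def invSubordination (ν : Measure ℝ) (c : ℝ) (w : ℂ) : ℂ := w - c * mTr ν w

section FiniteMeasure

variable {ν : Measure ℝ} [IsFiniteMeasure ν] {c : ℝ} {w : ℂ}

theorem integrable_resolvent_sq (hw : w ∉ algebraMap ℝ ℂ '' ν.support) :
    Integrable (fun x : ℝ => resolvent w x ^ 2) ν := by
  refine .of_bound (by fun_prop)
    ((Metric.infDist w (algebraMap ℝ ℂ '' ν.support))⁻¹ ^ 2) ?_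
  filter_upwards [Measure.support_mem_ae] with x hx
  grw [norm_pow, norm_resolvent_le_inv_infDist_support hw hx]

theorem mTr_im (hw : w ∉ algebraMap ℝ ℂ '' ν.support) : (mTr ν w).im = w.im * Inu ν w := by
  have him : ∀ x : ℝ, (resolvent w x).im = w.im * (normSq (x - w))⁻¹ := fun x => by
    simp only [resolvent, Ring.inverse_eq_inv', coe_algebraMap, inv_im, sub_im, ofReal_im]
    ring
  calc (mTr ν w).im = ∫ x : ℝ, (resolvent w x).im ∂ν := by
        rw [mTr_eq_resolventTransform, resolventTransform_apply]
        exact (integral_im (integrable_resolvent hw)).symm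
    _ = w.im * Inu ν w := by simp only [him, integral_const_mul, Inu]

theorem re_integral_resolvent_sq_lt_Inu (hν : ν ≠ 0) (hw : w.im ≠ 0) :
    (∫ x : ℝ, resolvent w x ^ 2 ∂ν).re < Inu ν w := by
  have hint := integrable_resolvent_sq (notMem_image_support_of_im_ne_zero ν hw)
  have hgap : ∀ x : ℝ, 0 < ‖resolvent w x ^ 2‖ - (resolvent w x ^ 2).re := fun x => by
    refine sub_pos.2 (re_sq_lt_norm_sq_of_im_ne_zero ?_)
    have hx : (x : ℂ) - w ≠ 0 := fun h => hw (by simpa using congrArg im h)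
    simpa [resolvent, inv_im, hx] using hw
  have hpos : 0 < ∫ x : ℝ, (‖resolvent w x ^ 2‖ - (resolvent w x ^ 2).re) ∂ν := by
    rw [integral_pos_iff_support_of_nonneg (fun x => (hgap x).le) (hint.norm.sub hint.re),
      Function.support_eq_univ fun x => (hgap x).ne']
    exact Measure.measure_univ_pos.2 hν
  rw [← sub_pos]
  calc 0 < ∫ x : ℝ, (‖resolvent w x ^ 2‖ - (resolvent w x ^ 2).re) ∂ν := hpos
    _ = ∫ x : ℝ, ‖resolvent w x ^ 2‖ ∂ν - ∫ x : ℝ, (resolvent w x ^ 2).re ∂ν :=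
        integral_sub hint.norm hint.re
    _ = Inu ν w - (∫ x : ℝ, resolvent w x ^ 2 ∂ν).re := by
        rw [Inu_eq_integral_norm_resolvent_sq]
        exact congrArg _ (integral_re hint)

theorem hasDerivAt_invSubordination (c : ℝ) (hw : w ∉ algebraMap ℝ ℂ '' ν.support) :
    HasDerivAt (invSubordination ν c) (1 - c * ∫ x : ℝ, resolvent w x ^ 2 ∂ν) w := by
  have hm := hasDerivAt_resolventTransform w hw
  rw [← mTr_eq_resolventTransform] at hm
  exact (hasDerivAt_id w).sub (hm.const_mul _)

theorem analyticAt_invSubordination (c : ℝ) (hw : w ∉ algebraMap ℝ ℂ '' ν.support) :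
    AnalyticAt ℂ (invSubordination ν c) w :=
  DifferentiableOn.analyticAt
    (fun _ hv => (hasDerivAt_invSubordination c hv).differentiableAt.differentiableWithinAt)
    ((isOpen_compl_image_support ν).mem_nhds hw)

theorem deriv_invSubordination_ne_zero_of_mul_re_lt_one (hw : w ∉ algebraMap ℝ ℂ '' ν.support)
    (h : c * (∫ x : ℝ, resolvent w x ^ 2 ∂ν).re < 1) : deriv (invSubordination ν c) w ≠ 0 := by
  rw [(hasDerivAt_invSubordination c hw).deriv, sub_ne_zero]
  intro h1
  have := congrArg re h1
  rw [one_re, re_ofReal_mul] at this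
  exact h.ne' this

theorem deriv_invSubordination_ne_zero_of_mul_Inu_lt_one (hc : 0 ≤ c)
    (hw : w ∉ algebraMap ℝ ℂ '' ν.support) (hI : c * Inu ν w < 1) :
    deriv (invSubordination ν c) w ≠ 0 :=
  deriv_invSubordination_ne_zero_of_mul_re_lt_one hw <|
    (mul_le_mul_of_nonneg_left (re_integral_resolvent_sq_le_Inu ν w) hc).trans_lt hI

theorem invSubordination_im (c : ℝ) (hw : w ∉ algebraMap ℝ ℂ '' ν.support) :
    (invSubordination ν c w).im = w.im * (1 - c * Inu ν w) := by
  rw [invSubordination, sub_im, im_ofReal_mul, mTr_im hw]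
  ring

theorem deriv_invSubordination_ne_zero_of_im_nonneg (hc : 0 < c) (hw : 0 < w.im)
    (him : 0 ≤ (invSubordination ν c w).im) : deriv (invSubordination ν c) w ≠ 0 := by
  have hsupp := notMem_image_support_of_im_ne_zero ν hw.ne'
  have hI : c * Inu ν w ≤ 1 := by
    rw [invSubordination_im c hsupp] at him
    exact sub_nonneg.1 (nonneg_of_mul_nonneg_right him hw)
  apply deriv_invSubordination_ne_zero_of_mul_re_lt_one hsupp
  rcases eq_or_ne ν 0 with rfl | hν
  · simp
  · exact (mul_lt_mul_of_pos_left (re_integral_resolvent_sq_lt_Inu hν hw.ne') hc).trans_le hI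

end FiniteMeasure

theorem invSubordination_subordination {μ ν : Measure ℝ} {t : ℝ} {ω : ℂ → ℂ}
    (hν : IsNevanlinna μ ν) (hω : IsSubordination μ t ω) {z : ℂ} (hz : 0 < z.im) :
    invSubordination ν (t - 1) (ω z) = z := by
  have hF : FTr μ (ω z) - ω z = mTr ν (ω z) := hν.2 _ (hz.trans_le (hω.im_ge z hz))
  have hsub := hω.subord z hz
  rw [invSubordination, ← hF]
  push_cast at hsub ⊢
  linear_combination hsub

theorem invSubordination_subordination_of_notMem_support {μ ν : Measure ℝ} {t : ℝ} {ω : ℂ → ℂ}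
    (hν : IsNevanlinna μ ν) (hω : IsSubordination μ t ω) {z : ℂ} (hz : 0 ≤ z.im)
    (hωz : ω z ∉ algebraMap ℝ ℂ '' ν.support) :
    invSubordination ν (t - 1) (ω z) = z := by
  have := hν.1
  have hEq : EqOn (invSubordination ν (t - 1) ∘ ω) id {z | 0 < z.im} := fun z hz =>
    invSubordination_subordination hν hω hz
  refine hEq.of_subset_closure
    (t := {z | 0 ≤ z.im ∧ ω z ∉ algebraMap ℝ ℂ '' ν.support}) ?_ continuousOn_id ?_ ?_ ⟨hz, hωz⟩
  · exact fun z hz => (analyticAt_invSubordination _ hz.2).continuousAt.comp_continuousWithinAt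
      ((hω.contOn z hz.1).mono fun _ h => h.1)
  · exact fun z (hz : 0 < z.im) => ⟨hz.le,
      notMem_image_support_of_im_ne_zero ν (hz.trans_le (hω.im_ge z hz)).ne'⟩
  · rw [closure_setOfPred_lt_im]
    exact fun z hz => hz.1

theorem statement5_general (μ : Measure ℝ) (μh : Measure ℝ) (hNev : IsNevanlinna μ μh)
    (t : ℝ) (ht : 1 < t) (ωt : ℂ → ℂ) (hsub : IsSubordination μ t ωt)
    (z0 : ℂ) (hz0 : 0 ≤ z0.im)
    (hcase : 0 < (ωt z0).im ∨
      (ωt z0 ∉ algebraMap ℝ ℂ '' μh.support ∧ Inu μh (ωt z0) < 1 / (t - 1))) :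
    ∃ r > (0 : ℝ), ∃ g : ℂ → ℂ, DifferentiableOn ℂ g (Metric.ball z0 r) ∧
      ∀ z ∈ Metric.ball z0 r ∩ {z : ℂ | 0 ≤ z.im}, g z = ωt z := by
  have := hNev.1
  have hc : 0 < t - 1 := sub_pos.2 ht
  have hsupp : ωt z0 ∉ algebraMap ℝ ℂ '' μh.support :=
    hcase.elim (fun him => notMem_image_support_of_im_ne_zero μh him.ne') And.left
  have hinv : ∀ᶠ z in 𝓝[{z | 0 ≤ z.im}] z0, invSubordination μh (t - 1) (ωt z) = z := by
    filter_upwards [self_mem_nhdsWithin,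
      (hsub.contOn z0 hz0).eventually ((isOpen_compl_image_support μh).mem_nhds hsupp)]
      with z hz hωz
    exact invSubordination_subordination_of_notMem_support hNev hsub hz hωz
  have hderiv : deriv (invSubordination μh (t - 1)) (ωt z0) ≠ 0 := by
    rcases hcase with him | ⟨-, hI⟩
    · refine deriv_invSubordination_ne_zero_of_im_nonneg hc him ?_
      rwa [hinv.self_of_nhdsWithin hz0]
    · exact deriv_invSubordination_ne_zero_of_mul_Inu_lt_one hc.le hsupp ((lt_div_iff₀' hc).1 hI)
  obtain ⟨g, hg, hgω⟩ := exists_analyticAt_eventuallyEq_of_eventually_leftInverse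
    (analyticAt_invSubordination _ hsupp) hderiv hz0 (hsub.contOn z0 hz0) hinv
  obtain ⟨r, hr, hdiff, heq⟩ := exists_differentiableOn_ball_eqOn_of_analyticAt hg hgω
  exact ⟨r, hr, g, hdiff, heq⟩

/-- local analyticity of `ω_t` at `z₀` when `Im ω_t(z₀) > 0`, or when
`ω_t(z₀)` is real, at positive distance from `supp μ̂`, with `I_{μ̂}(ω_t(z₀)) < 1/(t−1)`. -/
theorem statement5 (μ : Measure ℝ) (hprob : IsProbabilityMeasure μ)
    (hcpt : ∃ K : Set ℝ, IsCompact K ∧ μ Kᶜ = 0)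
    (hcent : ∫ x, x ∂μ = 0)
    (hnd : ∀ a : ℝ, μ ≠ Measure.dirac a)
    (μh : Measure ℝ) (hNev : IsNevanlinna μ μh)
    (t : ℝ) (ht : 1 < t)
    (ωt : ℂ → ℂ) (hsub : IsSubordination μ t ωt)
    (z0 : ℂ) (hz0 : 0 ≤ z0.im)
    (hcase : 0 < (ωt z0).im ∨
      ((ωt z0).im = 0 ∧ 0 < Metric.infDist (ωt z0).re (msupport μh) ∧
        Inu μh (ωt z0) < 1 / (t - 1))) :
    ∃ r > (0 : ℝ), ∃ g : ℂ → ℂ, DifferentiableOn ℂ g (Metric.ball z0 r) ∧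
      ∀ z ∈ Metric.ball z0 r ∩ {z : ℂ | 0 ≤ z.im}, g z = ωt z := by
  exact statement5_general μ μh hNev t ht ωt hsub z0 hz0 <|
    hcase.imp_right fun h => ⟨notMem_image_support_of_infDist_pos h.2.1, h.2.2⟩

end
end

section
/- Let μ satisfy Assumption 1, let t > 1, let ω_t be a subordination function for μ at time t, let μ^{⊞t} be the associated free convolution power with continuous density ρ_t, and let E_t be an exterior point of 𝒱_t such that E_t/t is not an atom of μ of mass ≥ 1 − 1/t. Then there exist constants S > 0, K > 0 and δ > 0 such that either: |ρ_t(E) − S·√(E − E_t)| ≤ K·(E − E_t) for all E ∈ (E_t, E_t + δ) and ρ_t(E) = 0 for all E ∈ (E_t − δ, E_t]; or the mirror statement holds: |ρ_t(E) − S·√(E_t − E)| ≤ K·(E_t − E) for all E ∈ (E_t − δ, E_t) and ρ_t(E) = 0 for all E ∈ [E_t, E_t + δ). -/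
open MeasureTheory Complex Set Filter Topology

noncomputable section

/-!
The map `φ(w) = t w - (t - 1) F_μ(w)` inverts the subordination function: `φ(ω_t(z)) = z`. The
Jacobi behaviour of `μ` makes `∫ |x - w|⁻² dμ(x)` blow up at the support, whereas the subordination
equation keeps it bounded along `ω_t` unless `E / t` is a heavy atom; hence `ω_t(E)` stays off the
support of `μ`, where `m_μ` and `φ` are analytic, and Stieltjes inversion gives
`ρ_t = Im m_μ(ω_t) / π` near `E_t`.

At an edge `ω_t(E_t) = a` is a real critical point of `φ`. If also `φ''(a) = 0`, then the third
derivative of `φ` at `a` is negative, by positivity of `∫ y² (M₁ y - M₂)²` with `y = (x - a)⁻¹`;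
this makes `φ' < 0` on both sides of `a`, while `φ' ≥ 0` at every real value of `ω_t`, so `ρ_t` is
positive on both sides of `E_t` and `E_t` is not an exterior point. Therefore `φ''(a) ≠ 0`, and
inverting `φ` near `a` produces the square root.
-/

/-! ### The Cauchy transform away from the support -/

/-- The spectral parameter `w` stays at positive distance from `μ`-almost every point. -/
def OffSupport (μ : Measure ℝ) (w : ℂ) : Prop :=
  ∃ r > 0, ∀ᵐ x : ℝ ∂μ, r ≤ ‖(x : ℂ) - w‖

/-- The inverse moment `∫ (x - w)⁻ᵏ dμ(x)`; up to a factorial, the `(k - 1)`-st derivative of the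
Cauchy transform. -/
def invMoment (μ : Measure ℝ) (k : ℕ) (w : ℂ) : ℂ := ∫ x : ℝ, (((x : ℂ) - w)⁻¹) ^ k ∂μ

lemma invMoment_one (μ : Measure ℝ) : invMoment μ 1 = mTr μ := by
  ext w
  simp only [invMoment, pow_one, mTr]

lemma offSupport_of_im_ne_zero (μ : Measure ℝ) {w : ℂ} (hw : w.im ≠ 0) : OffSupport μ w := by
  refine ⟨|w.im|, abs_pos.2 hw, ae_of_all _ fun x => ?_⟩
  simpa using abs_im_le_norm ((x : ℂ) - w)

lemma offSupport_ofReal_of_notMem_support {μ : Measure ℝ} {a : ℝ} (ha : a ∉ μ.support) :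
    OffSupport μ a := by
  obtain ⟨r, hr, hball⟩ := Metric.isOpen_iff.1 μ.isClosed_support.isOpen_compl a ha
  refine ⟨r, hr, ?_⟩
  filter_upwards [Measure.support_mem_ae (μ := μ)] with x hx
  have hxa : x ∉ Metric.ball a r := fun h => hball h hx
  rw [← ofReal_sub, norm_real]
  simpa [Real.dist_eq] using hxa

lemma hasDerivAt_inv_sub_pow {c v : ℂ} (hv : c - v ≠ 0) (k : ℕ) :
    HasDerivAt (fun v => ((c - v)⁻¹) ^ k) (k * ((c - v)⁻¹) ^ (k + 1)) v := by
  refine ((((hasDerivAt_id' v).const_sub c).fun_inv hv).fun_pow k).congr_deriv ?_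
  rcases k with _ | k
  · simp
  · rw [Nat.add_sub_cancel, neg_neg, one_div, ← inv_pow]
    ring

lemma norm_inv_pow_le {r : ℝ} (hr : 0 < r) {z : ℂ} (hz : r ≤ ‖z‖) (k : ℕ) :
    ‖z⁻¹ ^ k‖ ≤ r⁻¹ ^ k := by
  rw [norm_pow, norm_inv]
  gcongr

namespace OffSupport

variable {μ : Measure ℝ} {w : ℂ}

lemma exists_uniform (hw : OffSupport μ w) :
    ∃ r > 0, ∀ v ∈ Metric.ball w r, ∀ᵐ x : ℝ ∂μ, r ≤ ‖(x : ℂ) - v‖ := by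
  obtain ⟨r, hr, hae⟩ := hw
  refine ⟨r / 2, half_pos hr, fun v hv => ?_⟩
  filter_upwards [hae] with x hx
  have htri := norm_sub_le_norm_sub_add_norm_sub (x : ℂ) v w
  rw [Metric.mem_ball, dist_eq_norm] at hv
  linarith

lemma eventually (hw : OffSupport μ w) : ∀ᶠ v in 𝓝 w, OffSupport μ v := by
  obtain ⟨r, hr, hae⟩ := hw.exists_uniform
  filter_upwards [Metric.ball_mem_nhds w hr] with v hv using ⟨r, hr, hae v hv⟩

variable [IsFiniteMeasure μ]

lemma integrable_inv_pow (hw : OffSupport μ w) (k : ℕ) :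
    Integrable (fun x : ℝ => (((x : ℂ) - w)⁻¹) ^ k) μ := by
  obtain ⟨r, hr, hae⟩ := hw
  refine Integrable.of_bound (by fun_prop) (r⁻¹ ^ k) ?_
  filter_upwards [hae] with x hx using norm_inv_pow_le hr hx k

lemma hasDerivAt_invMoment (hw : OffSupport μ w) (k : ℕ) :
    HasDerivAt (invMoment μ k) (k * invMoment μ (k + 1) w) w := by
  obtain ⟨r, hr, hae⟩ := hw.exists_uniform
  have hae' : ∀ᵐ x : ℝ ∂μ, ∀ v ∈ Metric.ball w (r / 2), r / 2 ≤ ‖(x : ℂ) - v‖ := by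
    filter_upwards [hae w (Metric.mem_ball_self hr)] with x hx v hv
    have htri := norm_sub_le_norm_sub_add_norm_sub (x : ℂ) v w
    rw [Metric.mem_ball, dist_eq_norm] at hv
    linarith
  have hderiv := (hasDerivAt_integral_of_dominated_loc_of_deriv_le (μ := μ)
    (F := fun v x => (((x : ℂ) - v)⁻¹) ^ k)
    (F' := fun v x => k * (((x : ℂ) - v)⁻¹) ^ (k + 1)) (bound := fun _ => k * (r / 2)⁻¹ ^ (k + 1))
    (Metric.ball_mem_nhds w (half_pos hr)) (.of_forall fun v => by fun_prop)
    (hw.integrable_inv_pow k) (by fun_prop) ?_ (integrable_const _) ?_).2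
  · rwa [integral_const_mul] at hderiv
  · filter_upwards [hae'] with x hx v hv
    rw [norm_mul, norm_natCast]
    exact mul_le_mul_of_nonneg_left (norm_inv_pow_le (half_pos hr) (hx v hv) _) k.cast_nonneg
  · filter_upwards [hae'] with x hx v hv
    have hne : (x : ℂ) - v ≠ 0 := norm_pos_iff.1 ((half_pos hr).trans_le (hx v hv))
    exact hasDerivAt_inv_sub_pow hne k

lemma hasDerivAt_mTr (hw : OffSupport μ w) : HasDerivAt (mTr μ) (invMoment μ 2 w) w := by
  simpa [invMoment_one] using hw.hasDerivAt_invMoment 1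

lemma analyticAt_mTr (hw : OffSupport μ w) : AnalyticAt ℂ (mTr μ) w :=
  analyticAt_iff_eventually_differentiableAt.2 <|
    hw.eventually.mono fun _ hv => hv.hasDerivAt_mTr.differentiableAt

lemma integrable_inv_normSq (hw : OffSupport μ w) :
    Integrable (fun x : ℝ => (normSq ((x : ℂ) - w))⁻¹) μ := by
  refine (hw.integrable_inv_pow 2).norm.congr (.of_forall fun x => ?_)
  simp [normSq_eq_norm_sq]

lemma im_mTr (hw : OffSupport μ w) : (mTr μ w).im = w.im * Inu μ w := by
  have hint : Integrable (fun x : ℝ => ((x : ℂ) - w)⁻¹) μ := by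
    simpa using hw.integrable_inv_pow 1
  rw [mTr, ← RCLike.im_eq_complex_im, ← integral_im hint, Inu, ← integral_const_mul]
  congr with x
  simp [div_eq_mul_inv]

lemma Inu_pos [NeZero μ] (hw : OffSupport μ w) : 0 < Inu μ w := by
  refine (integral_pos_iff_support_of_nonneg_ae (.of_forall fun x => inv_nonneg.2 (normSq_nonneg _))
    hw.integrable_inv_normSq).2 ?_
  obtain ⟨r, hr, hae⟩ := hw
  have hfull : (Function.support fun x : ℝ => (normSq ((x : ℂ) - w))⁻¹) ∈ ae μ := by
    filter_upwards [hae] with x hx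
    exact inv_ne_zero (normSq_pos.2 (norm_pos_iff.1 (hr.trans_le hx))).ne'
  rw [measure_congr (eventuallyEq_univ.2 hfull)]
  exact NeZero.pos _

end OffSupport

lemma mTr_conj (μ : Measure ℝ) (w : ℂ) :
    mTr μ ((starRingEnd ℂ) w) = (starRingEnd ℂ) (mTr μ w) := by
  rw [mTr, mTr, ← integral_conj]
  congr with x
  rw [map_inv₀, map_sub, conj_ofReal]

lemma invMoment_ofReal (μ : Measure ℝ) (k : ℕ) (a : ℝ) :
    invMoment μ k a = ((∫ x : ℝ, ((x - a)⁻¹) ^ k ∂μ : ℝ) : ℂ) := by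
  simp only [invMoment, ← integral_complex_ofReal]
  push_cast
  rfl

/-! ### Stieltjes inversion -/

lemma normSq_ofReal_sub_add_mul_I (x y η : ℝ) :
    normSq ((y : ℂ) - (x + η * I)) = (x - y) ^ 2 + η ^ 2 := by
  simp only [normSq_apply, sub_re, sub_im, add_re, add_im, mul_re, mul_im, ofReal_re, ofReal_im,
    I_re, I_im]
  ring

lemma intervalIntegral_poisson_kernel (a b y : ℝ) {η : ℝ} (hη : 0 < η) :
    ∫ x in a..b, η * ((x - y) ^ 2 + η ^ 2)⁻¹
      = Real.arctan ((b - y) / η) - Real.arctan ((a - y) / η) := by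
  refine intervalIntegral.integral_eq_sub_of_hasDerivAt
    (f := fun x => Real.arctan ((x - y) / η)) (fun x _ => ?_) ?_
  · refine (((hasDerivAt_id' x).sub_const y).div_const η).arctan.congr_deriv ?_
    field_simp
    ring
  · exact (Continuous.mul continuous_const
      (Continuous.inv₀ (by fun_prop) fun x => by positivity)).intervalIntegrable _ _

lemma tendsto_integral_arctan (ν : Measure ℝ) [IsFiniteMeasure ν] (c : ℝ) :
    Tendsto (fun η : ℝ => ∫ y, Real.arctan ((c - y) / η) ∂ν) (𝓝[>] 0)
      (𝓝 (Real.pi / 2 * (ν.real (Iio c) - ν.real (Ioi c)))) := by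
  have hlim : ∀ y, Tendsto (fun η : ℝ => Real.arctan ((c - y) / η)) (𝓝[>] 0)
      (𝓝 (Real.pi / 2 * ((Iio c).indicator 1 y - (Ioi c).indicator 1 y))) := by
    intro y
    simp only [div_eq_mul_inv (c - y)]
    rcases lt_trichotomy y c with h | rfl | h
    · simpa [h, h.le, Function.comp_def] using
        (Real.tendsto_arctan_atTop.mono_right nhdsWithin_le_nhds).comp
        (tendsto_inv_nhdsGT_zero.const_mul_atTop (sub_pos.2 h))
    · simp
    · simpa [h, h.le, Function.comp_def] using
        (Real.tendsto_arctan_atBot.mono_right nhdsWithin_le_nhds).comp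
        (tendsto_inv_nhdsGT_zero.const_mul_atTop_of_neg (sub_neg.2 h))
  have hval : ∫ y, Real.pi / 2 * ((Iio c).indicator 1 y - (Ioi c).indicator 1 y) ∂ν
      = Real.pi / 2 * (ν.real (Iio c) - ν.real (Ioi c)) := by
    rw [integral_const_mul, integral_sub ((integrable_const 1).indicator measurableSet_Iio)
      ((integrable_const 1).indicator measurableSet_Ioi),
      integral_indicator_one measurableSet_Iio, integral_indicator_one measurableSet_Ioi]
  rw [← hval]
  refine tendsto_integral_filter_of_norm_le_const
    (.of_forall fun η => (Real.continuous_arctan.comp (by fun_prop)).aestronglyMeasurable)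
    ⟨Real.pi / 2, .of_forall fun η => ae_of_all _ fun y => ?_⟩ (ae_of_all _ hlim)
  exact abs_le.2 ⟨(Real.neg_pi_div_two_lt_arctan _).le, (Real.arctan_lt_pi_div_two _).le⟩

section StieltjesInversion

variable {ν : Measure ℝ} [IsFiniteMeasure ν]

lemma im_mTr_add_mul_I (x : ℝ) {η : ℝ} (hη : 0 < η) :
    (mTr ν (x + η * I)).im = ∫ y, η * ((x - y) ^ 2 + η ^ 2)⁻¹ ∂ν := by
  have him : ((x : ℂ) + η * I).im = η := by simp
  rw [(offSupport_of_im_ne_zero ν (by simpa using hη.ne')).im_mTr, him, Inu, integral_const_mul]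
  simp_rw [normSq_ofReal_sub_add_mul_I]

lemma poisson_kernel_le {η : ℝ} (hη : 0 < η) (s : ℝ) :
    ‖η * (s ^ 2 + η ^ 2)⁻¹‖ ≤ η * (η ^ 2)⁻¹ := by
  rw [Real.norm_of_nonneg (by positivity)]
  gcongr
  exact le_add_of_nonneg_left (sq_nonneg s)

lemma intervalIntegral_im_mTr (a b : ℝ) {η : ℝ} (hη : 0 < η) :
    ∫ x in a..b, (mTr ν (x + η * I)).im
      = ∫ y, Real.arctan ((b - y) / η) ∂ν - ∫ y, Real.arctan ((a - y) / η) ∂ν := by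
  have harctan : ∀ c, Integrable (fun y => Real.arctan ((c - y) / η)) ν := fun c =>
    Integrable.of_bound (Real.continuous_arctan.comp (by fun_prop)).aestronglyMeasurable
      (Real.pi / 2) <| ae_of_all _ fun y =>
        abs_le.2 ⟨(Real.neg_pi_div_two_lt_arctan _).le, (Real.arctan_lt_pi_div_two _).le⟩
  have hswap : Integrable (Function.uncurry fun x y : ℝ => η * ((x - y) ^ 2 + η ^ 2)⁻¹)
      ((volume.restrict (uIoc a b)).prod ν) := by
    have : IsFiniteMeasure (volume.restrict (uIoc a b)) := by
      rw [uIoc]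
      infer_instance
    exact Integrable.of_bound (by fun_prop) (η * (η ^ 2)⁻¹)
      (ae_of_all _ fun p => poisson_kernel_le hη _)
  simp_rw [im_mTr_add_mul_I _ hη]
  rw [intervalIntegral_integral_swap hswap, ← integral_sub (harctan b) (harctan a)]
  simp_rw [intervalIntegral_poisson_kernel a b _ hη]

lemma mul_im_mTr_ge_measureReal_singleton (c : ℝ) {η : ℝ} (hη : 0 < η) :
    ν.real {c} ≤ η * (mTr ν (c + η * I)).im := by
  have hint : Integrable (fun y => η * ((c - y) ^ 2 + η ^ 2)⁻¹) ν :=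
    Integrable.of_bound (by fun_prop) (η * (η ^ 2)⁻¹) (ae_of_all _ fun y => poisson_kernel_le hη _)
  have hsingle : ∫ y in {c}, η * ((c - y) ^ 2 + η ^ 2)⁻¹ ∂ν ≤ (mTr ν (c + η * I)).im := by
    rw [im_mTr_add_mul_I c hη]
    exact setIntegral_le_integral hint (ae_of_all _ fun y => by positivity)
  rw [integral_singleton] at hsingle
  refine le_trans (le_of_eq ?_) (mul_le_mul_of_nonneg_left hsingle hη.le)
  rw [sub_self, zero_pow two_ne_zero, zero_add, smul_eq_mul]
  field_simp

lemma measureReal_singleton_eq_zero_of_tendsto_im_mTr {c L : ℝ}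
    (h : Tendsto (fun η : ℝ => (mTr ν (c + η * I)).im) (𝓝[>] 0) (𝓝 L)) : ν.real {c} = 0 := by
  refine le_antisymm ?_ measureReal_nonneg
  have hprod := (tendsto_nhdsWithin_of_tendsto_nhds (tendsto_id (α := ℝ)) (s := Ioi 0)).mul h
  rw [zero_mul] at hprod
  refine ge_of_tendsto hprod ?_
  filter_upwards [self_mem_nhdsWithin] with η hη using mul_im_mTr_ge_measureReal_singleton c hη

lemma continuous_im_mTr_add_mul_I {η : ℝ} (hη : 0 < η) :
    Continuous fun x : ℝ => (mTr ν (x + η * I)).im := by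
  refine continuous_im.comp (continuous_iff_continuousAt.2 fun x => ?_)
  have hoff : OffSupport ν ((x : ℂ) + η * I) := offSupport_of_im_ne_zero ν (by simpa using hη.ne')
  exact hoff.hasDerivAt_mTr.continuousAt.comp (f := fun x : ℝ => (x : ℂ) + η * I) (by fun_prop)

variable {U : Set ℝ} {g : ℝ → ℝ}

lemma measureReal_Ioc_of_tendstoLocallyUniformlyOn_im_mTr
    (hg : TendstoLocallyUniformlyOn (fun (η : ℝ) (x : ℝ) => (mTr ν (x + η * I)).im) g (𝓝[>] 0) U)
    {a b : ℝ} (hab : a ≤ b) (hU : Icc a b ⊆ U) :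
    Real.pi * ν.real (Ioc a b) = ∫ x in a..b, g x := by
  have hnull : ∀ c ∈ Icc a b, ν.real {c} = 0 := fun c hc =>
    measureReal_singleton_eq_zero_of_tendsto_im_mTr (hg.tendsto_at (hU hc))
  have hlim : Tendsto (fun η : ℝ => ∫ x in a..b, (mTr ν (x + η * I)).im) (𝓝[>] 0)
      (𝓝 (∫ x in a..b, g x)) := by
    refine TendstoUniformlyOn.tendsto_intervalIntegral_of_continuousOn ?_ ?_
    · filter_upwards [self_mem_nhdsWithin] with η hη
        using (continuous_im_mTr_add_mul_I hη).continuousOn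
    · rw [uIcc_of_le hab]
      exact (tendstoLocallyUniformlyOn_iff_tendstoUniformlyOn_of_compact isCompact_Icc).1
        (hg.mono hU)
  refine tendsto_nhds_unique ?_ hlim
  have harctan := (tendsto_integral_arctan ν b).sub (tendsto_integral_arctan ν a)
  have hIic : ∀ c ∈ Icc a b, ν.real (Iio c) = ν.real (Iic c) := fun c hc => by
    rw [← Iio_union_right, measureReal_union (by simp) (measurableSet_singleton c), hnull c hc,
      add_zero]
  have hIocIic : ν.real (Iic b) = ν.real (Iic a) + ν.real (Ioc a b) := by
    rw [← Iic_union_Ioc_eq_Iic hab, measureReal_union (Iic_disjoint_Ioc le_rfl) measurableSet_Ioc]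
  have hIocIoi : ν.real (Ioi a) = ν.real (Ioc a b) + ν.real (Ioi b) := by
    rw [← Ioc_union_Ioi_eq_Ioi hab, measureReal_union (Ioc_disjoint_Ioi le_rfl) measurableSet_Ioi]
  rw [hIic b ⟨hab, le_rfl⟩, hIic a ⟨le_rfl, hab⟩, hIocIic, hIocIoi] at harctan
  refine (harctan.congr' ?_).trans (le_of_eq (by congr 1; ring))
  filter_upwards [self_mem_nhdsWithin] with η hη using (intervalIntegral_im_mTr a b hη).symm

lemma restrict_Ioc_eq_withDensity_of_tendstoLocallyUniformlyOn_im_mTr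
    (hg : TendstoLocallyUniformlyOn (fun (η : ℝ) (x : ℝ) => (mTr ν (x + η * I)).im) g (𝓝[>] 0) U)
    (hcont : ContinuousOn g U) (hpos : ∀ x ∈ U, 0 ≤ g x) {A B : ℝ} (hU : Icc A B ⊆ U) :
    ν.restrict (Ioc A B)
      = volume.withDensity ((Ioc A B).indicator fun x => ENNReal.ofReal (g x / Real.pi)) := by
  refine Measure.ext_of_Ioc _ _ fun a b _ => ?_
  rw [Measure.restrict_apply measurableSet_Ioc, withDensity_indicator measurableSet_Ioc,
    withDensity_apply _ measurableSet_Ioc, Measure.restrict_restrict measurableSet_Ioc,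
    Ioc_inter_Ioc]
  rcases lt_or_ge (min b B) (max a A) with hempty | hle
  · simp [Ioc_eq_empty hempty.not_gt]
  have hsub : Icc (max a A) (min b B) ⊆ U :=
    (Icc_subset_Icc (le_max_right _ _) (min_le_right _ _)).trans hU
  have hmass := measureReal_Ioc_of_tendstoLocallyUniformlyOn_im_mTr hg hle hsub
  have hint : IntegrableOn (fun x => g x / Real.pi) (Ioc (max a A) (min b B)) :=
    (((hcont.mono hsub).integrableOn_Icc).mono_set Ioc_subset_Icc_self).div_const _
  rw [← ofReal_integral_eq_lintegral_ofReal hint, integral_div,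
    ← intervalIntegral.integral_of_le hle, ← hmass, mul_div_cancel_left₀ _ Real.pi_ne_zero,
    ofReal_measureReal]
  filter_upwards [ae_restrict_mem measurableSet_Ioc] with x hx
  exact div_nonneg (hpos x (hsub (Ioc_subset_Icc_self hx))) Real.pi_pos.le

lemma eqOn_of_rnDeriv_ae_eq_of_tendstoLocallyUniformlyOn_im_mTr
    (hg : TendstoLocallyUniformlyOn (fun (η : ℝ) (x : ℝ) => (mTr ν (x + η * I)).im) g (𝓝[>] 0) U)
    (hU : IsOpen U) {ρ : ℝ → ENNReal} (hρc : Continuous ρ) (hρ : ν.rnDeriv volume =ᵐ[volume] ρ) :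
    EqOn ρ (fun x => ENNReal.ofReal (g x / Real.pi)) U := by
  have hcont : ContinuousOn g U := hg.continuousOn <| Eventually.frequently <| by
    filter_upwards [self_mem_nhdsWithin] with η hη
      using (continuous_im_mTr_add_mul_I hη).continuousOn
  have hpos : ∀ x ∈ U, 0 ≤ g x := fun x hx => by
    refine ge_of_tendsto (hg.tendsto_at hx) ?_
    filter_upwards [self_mem_nhdsWithin] with η hη
    exact nonneg_of_mul_nonneg_right
      (measureReal_nonneg.trans (mul_im_mTr_ge_measureReal_singleton x hη)) hη
  intro c hc
  obtain ⟨r, hr, hball⟩ := Metric.nhds_basis_closedBall.mem_iff.1 (hU.mem_nhds hc)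
  rw [Real.closedBall_eq_Icc] at hball
  have hdens := restrict_Ioc_eq_withDensity_of_tendstoLocallyUniformlyOn_im_mTr hg hcont hpos hball
  have hcontD : ContinuousOn (fun x => ENNReal.ofReal (g x / Real.pi)) (Icc (c - r) (c + r)) :=
    ENNReal.continuous_ofReal.comp_continuousOn ((hcont.mono hball).div_const _)
  have hmeas : AEMeasurable
      ((Ioc (c - r) (c + r)).indicator fun x => ENNReal.ofReal (g x / Real.pi)) volume :=
    (aemeasurable_indicator_iff measurableSet_Ioc).2
      ((hcontD.mono Ioc_subset_Icc_self).aemeasurable measurableSet_Ioc)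
  have hae : ρ =ᵐ[volume.restrict (Ioo (c - r) (c + r))]
      fun x => ENNReal.ofReal (g x / Real.pi) := by
    filter_upwards [ae_restrict_of_ae hρ, ae_restrict_mem measurableSet_Ioo,
      ae_restrict_of_ae (ν.rnDeriv_restrict volume (measurableSet_Ioc (a := c - r) (b := c + r))),
      ae_restrict_of_ae (hdens ▸ Measure.rnDeriv_withDensity₀ volume hmeas)] with x hx hmem h1 h2
    rw [indicator_of_mem (Ioo_subset_Ioc_self hmem)] at h1 h2
    rw [← hx, ← h1, h2]
  exact Measure.eqOn_open_of_ae_eq hae isOpen_Ioo hρc.continuousOn (hcontD.mono Ioo_subset_Icc_self)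
    ⟨by linarith, by linarith⟩

end StieltjesInversion

/-! ### Thick measures -/

/-- Around every point of its support, the mass that `μ` gives to small balls is not bounded by a
multiple of the square of their radius; then `∫ |x - w|⁻² dμ(x)` is unbounded as `w` approaches the
support. -/
def HasThickSupport (μ : Measure ℝ) : Prop :=
  ∀ x ∈ μ.support, ¬ (fun h => μ.real (Metric.closedBall x h)) =O[𝓝[>] 0] fun h : ℝ => h ^ 2

lemma not_isBigO_sq_of_eventually_rpow_le {f : ℝ → ℝ} {c γ : ℝ} (hc : 0 < c) (hγ : γ < 2)
    (hf : ∀ᶠ h in 𝓝[>] 0, c * h ^ γ ≤ f h) : ¬ f =O[𝓝[>] 0] fun h : ℝ => h ^ 2 := by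
  intro hO
  obtain ⟨C, hC⟩ := hO.bound
  have hlim : Tendsto (fun h : ℝ => C * h ^ (2 - γ)) (𝓝[>] 0) (𝓝 0) := by
    have hcont : ContinuousAt (fun h : ℝ => C * h ^ (2 - γ)) 0 :=
      (Real.continuousAt_rpow_const 0 _ (.inr (sub_pos.2 hγ).le)).const_mul C
    simpa [ContinuousAt, Real.zero_rpow (sub_pos.2 hγ).ne'] using hcont.tendsto.mono_left
      nhdsWithin_le_nhds
  refine hc.not_ge (ge_of_tendsto hlim ?_)
  filter_upwards [hf, hC, self_mem_nhdsWithin] with h hfh hCh (hh : 0 < h)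
  have hsplit : h ^ 2 = h ^ (2 - γ) * h ^ γ := by
    rw [← Real.rpow_add hh, sub_add_cancel, Real.rpow_two]
  have hle : f h ≤ C * h ^ (2 - γ) * h ^ γ := by
    rw [mul_assoc, ← hsplit, ← Real.norm_of_nonneg (sq_nonneg h)]
    exact (le_abs_self _).trans hCh
  exact le_of_mul_le_mul_right (hfh.trans hle) (Real.rpow_pos_of_pos hh γ)

lemma rpow_mul_rpow_sub_le {p L β γ : ℝ} (hp : 0 < p) (hpL : p ≤ L) (hβ : β ≤ γ) :
    L ^ (β - γ) * p ^ γ ≤ p ^ β := by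
  calc L ^ (β - γ) * p ^ γ ≤ p ^ (β - γ) * p ^ γ :=
        mul_le_mul_of_nonneg_right (Real.rpow_le_rpow_of_nonpos hp hpL (sub_nonpos.2 hβ))
          (Real.rpow_nonneg hp.le γ)
    _ = p ^ β := by rw [← Real.rpow_add hp, sub_add_cancel]

lemma rpow_mul_sub_le_jacobi_weight {A B E α β γ : ℝ} (hE : E ∈ Ioo A B) (hα : α ≤ γ)
    (hβ : β ≤ γ) :
    (B - A) ^ (α - γ) * (B - A) ^ (β - γ) * ((E - A) * (B - E)) ^ γ
      ≤ (E - A) ^ α * (B - E) ^ β := by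
  obtain ⟨hA, hB⟩ := hE
  have hA' : 0 < E - A := sub_pos.2 hA
  have hB' : 0 < B - E := sub_pos.2 hB
  have hL : 0 < B - A := by linarith
  rw [Real.mul_rpow hA'.le hB'.le, mul_mul_mul_comm]
  exact mul_le_mul (rpow_mul_rpow_sub_le hA' (by linarith) hα)
    (rpow_mul_rpow_sub_le hB' (by linarith) hβ) (by positivity) (by positivity)

/-- Half of the ball around `x`, on the side of the farther endpoint, keeps away from both endpoints
of the interval. -/
lemma exists_Ioo_subset_closedBall {A B x h : ℝ} (hx : x ∈ Icc A B) (hhL : h ≤ (B - A) / 3) :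
    ∃ s, Ioo s (s + h / 2) ⊆ Metric.closedBall x h ∧ Ioo s (s + h / 2) ⊆ Ioo A B ∧
      ∀ E ∈ Ioo s (s + h / 2), (B - A) / 12 * h ≤ (E - A) * (B - E) := by
  obtain ⟨hA, hB⟩ := hx
  rw [Real.closedBall_eq_Icc]
  rcases le_total x ((A + B) / 2) with hmid | hmid
  · refine ⟨x + h / 2, fun E hE => ?_, fun E hE => ?_, fun E hE => ?_⟩ <;>
      obtain ⟨h1, h2⟩ := hE
    · constructor <;> linarith
    · constructor <;> linarith
    · linarith [mul_le_mul (by linarith : h / 2 ≤ E - A) (by linarith : (B - A) / 6 ≤ B - E)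
        (by linarith) (by linarith)]
  · refine ⟨x - h, fun E hE => ?_, fun E hE => ?_, fun E hE => ?_⟩ <;>
      obtain ⟨h1, h2⟩ := hE
    · constructor <;> linarith
    · constructor <;> linarith
    · linarith [mul_le_mul (by linarith : (B - A) / 6 ≤ E - A) (by linarith : h / 2 ≤ B - E)
        (by linarith) (by linarith)]

namespace JacobiData

variable {μ : Measure ℝ} (d : JacobiData μ)

lemma measure_eq {S : Set ℝ} (hS : MeasurableSet S) :
    μ S = (∫⁻ x in S, ENNReal.ofReal (d.ρ x))
      + ∑ a ∈ d.atoms, ENNReal.ofReal (d.w a) * S.indicator 1 a := by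
  conv_lhs => rw [d.decomp]
  simp only [Measure.add_apply, withDensity_apply _ hS, Measure.finsetSum_apply,
    Measure.smul_apply, Measure.dirac_apply' _ hS, smul_eq_mul]

lemma measureReal_ge_of_ae_le_density {S : Set ℝ} (hS : MeasurableSet S) {k : ℝ} (hk : 0 ≤ k)
    (h : ∀ᵐ E ∂volume.restrict S, k ≤ d.ρ E) : k * volume.real S ≤ μ.real S := by
  have := d.prob
  have hle : ENNReal.ofReal k * volume S ≤ μ S := by
    calc ENNReal.ofReal k * volume S = ∫⁻ _ in S, ENNReal.ofReal k := by
          rw [setLIntegral_const]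
      _ ≤ ∫⁻ E in S, ENNReal.ofReal (d.ρ E) :=
          lintegral_mono_ae (h.mono fun E hE => ENNReal.ofReal_le_ofReal hE)
      _ ≤ μ S := d.measure_eq hS ▸ le_self_add
  simpa [measureReal_def, ENNReal.toReal_ofReal hk] using
    ENNReal.toReal_mono (measure_ne_top μ S) hle

lemma eventually_rpow_le_measureReal_closedBall (j : Fin d.n) {x : ℝ}
    (hx : x ∈ Icc (d.Em j) (d.Ep j)) :
    ∃ c > 0, ∃ γ < (1 : ℝ), ∀ᶠ h in 𝓝[>] 0, c * h ^ (1 + γ) ≤ μ.real (Metric.closedBall x h) := by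
  have := d.prob
  set γ := max 0 (max (d.βm j) (d.βp j))
  set L := d.Ep j - d.Em j
  have hL : 0 < L := sub_pos.2 (d.lt j)
  have hC : 0 < d.Cj j := one_pos.trans_le (d.Cj_ge j)
  have hγ0 : 0 ≤ γ := le_max_left _ _
  have hβm : d.βm j ≤ γ := (le_max_left _ _).trans (le_max_right _ _)
  have hβp : d.βp j ≤ γ := (le_max_right _ _).trans (le_max_right _ _)
  set k := (d.Cj j)⁻¹ * (L ^ (d.βm j - γ) * L ^ (d.βp j - γ)) with hk
  have : 0 < k := by positivity
  refine ⟨k * (L / 12) ^ γ / 2, by positivity, γ,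
    max_lt one_pos (max_lt (d.βm_mem j).2 (d.βp_mem j).2), ?_⟩
  filter_upwards [Ioc_mem_nhdsGT (by positivity : 0 < L / 3)] with h hh
  obtain ⟨hh0, hhL⟩ := hh
  obtain ⟨s, hball, hsub, hprod⟩ := exists_Ioo_subset_closedBall hx hhL
  have hdens : ∀ᵐ E ∂volume.restrict (Ioo s (s + h / 2)), k * (L / 12 * h) ^ γ ≤ d.ρ E := by
    filter_upwards [ae_restrict_mem measurableSet_Ioo,
      ae_restrict_of_ae_restrict_of_subset (hsub.trans Ioo_subset_Icc_self) (d.powerLaw j)]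
      with E hE hρ
    refine le_trans ?_ hρ.1
    rw [hk, mul_assoc]
    refine mul_le_mul_of_nonneg_left ?_ (inv_nonneg.2 hC.le)
    refine le_trans ?_ (rpow_mul_sub_le_jacobi_weight (hsub hE) hβm hβp)
    exact mul_le_mul_of_nonneg_left
      (Real.rpow_le_rpow (by positivity) (hprod E hE) hγ0) (by positivity)
  calc k * (L / 12) ^ γ / 2 * h ^ (1 + γ)
      = k * (L / 12 * h) ^ γ * volume.real (Ioo s (s + h / 2)) := by
        rw [Real.volume_real_Ioo_of_le (by linarith), Real.mul_rpow (by positivity) hh0.le,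
          Real.rpow_add hh0, Real.rpow_one]
        ring
    _ ≤ μ.real (Ioo s (s + h / 2)) :=
        d.measureReal_ge_of_ae_le_density measurableSet_Ioo (by positivity) hdens
    _ ≤ μ.real (Metric.closedBall x h) := measureReal_mono hball

lemma weight_le_measureReal_closedBall {a : ℝ} (ha : a ∈ d.atoms) {h : ℝ} (hh : 0 ≤ h) :
    d.w a ≤ μ.real (Metric.closedBall a h) := by
  have := d.prob
  have hle : ENNReal.ofReal (d.w a) ≤ μ (Metric.closedBall a h) := by
    rw [d.measure_eq Metric.isClosed_closedBall.measurableSet]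
    refine le_trans (le_of_eq ?_) ((Finset.single_le_sum (fun _ _ => zero_le) ha).trans
      le_add_self)
    simp [hh]
  exact (ENNReal.ofReal_le_iff_le_toReal (measure_ne_top _ _)).1 hle

lemma support_subset : μ.support ⊆ d.acSupport ∪ {a | a ∈ d.atoms ∧ 0 < d.w a} := by
  have hac : IsClosed d.acSupport := isClosed_iUnion_of_finite fun j => isClosed_Icc
  have hat : IsClosed {a | a ∈ d.atoms ∧ 0 < d.w a} :=
    (d.atoms.finite_toSet.subset fun a ha => ha.1).isClosed
  refine Measure.support_subset_of_isClosed (hac.union hat) ?_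
  have hmeas := (hac.union hat).measurableSet.compl
  rw [mem_ae_iff, d.measure_eq hmeas, add_eq_zero]
  refine ⟨?_, Finset.sum_eq_zero fun a ha => ?_⟩
  · refine (setLIntegral_congr_fun hmeas fun x hx => ?_).trans lintegral_zero
    rw [d.ρ_supp x fun h => hx (.inl h), ENNReal.ofReal_zero]
  · rcases (d.w_nonneg a).eq_or_lt' with hw | hw
    · simp [hw]
    · simp [ha, hw]

lemma hasThickSupport (d : JacobiData μ) : HasThickSupport μ := by
  intro x hx
  rcases d.support_subset hx with hac | ⟨hat, hw⟩
  · obtain ⟨j, hj⟩ := mem_iUnion.1 hac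
    obtain ⟨c, hc, γ, hγ, hle⟩ := d.eventually_rpow_le_measureReal_closedBall j hj
    exact not_isBigO_sq_of_eventually_rpow_le hc (by linarith) hle
  · refine not_isBigO_sq_of_eventually_rpow_le hw two_pos ?_
    filter_upwards [self_mem_nhdsWithin] with h hh
    simpa using d.weight_le_measureReal_closedBall hat (le_of_lt hh)

end JacobiData

/-! ### The subordination function avoids the support -/

section Concentration

variable {μ : Measure ℝ} [IsFiniteMeasure μ] {w : ℂ} {x₀ : ℝ}

lemma measureReal_closedBall_le_mul_Inu (hw : OffSupport μ w) {h : ℝ} (hwx : ‖w - x₀‖ ≤ h) :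
    μ.real (Metric.closedBall x₀ h) ≤ (2 * h) ^ 2 * Inu μ w := by
  rw [Inu, ← integral_const_mul,
    ← integral_indicator_one (μ := μ) Metric.isClosed_closedBall.measurableSet]
  refine integral_mono_ae ((integrable_const 1).indicator
    Metric.isClosed_closedBall.measurableSet) (hw.integrable_inv_normSq.const_mul _) ?_
  obtain ⟨r, hr, hae⟩ := hw
  filter_upwards [hae] with x hx
  by_cases hxh : x ∈ Metric.closedBall x₀ h
  · have hpos : 0 < normSq ((x : ℂ) - w) := normSq_pos.2 (norm_pos_iff.1 (hr.trans_le hx))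
    have hdist : ‖(x : ℂ) - w‖ ≤ 2 * h := by
      have htri := norm_sub_le_norm_sub_add_norm_sub (x : ℂ) x₀ w
      rw [norm_sub_rev (x₀ : ℂ), ← ofReal_sub, norm_real] at htri
      have := mem_closedBall_iff_norm.1 hxh
      linarith
    rw [indicator_of_mem hxh, Pi.one_apply, ← div_eq_mul_inv, one_le_div hpos, normSq_eq_norm_sq]
    gcongr
  · rw [indicator_of_notMem hxh]
    exact mul_nonneg (sq_nonneg _) (inv_nonneg.2 (normSq_nonneg _))

lemma setIntegral_norm_inv_le_sqrt (hw : OffSupport μ w) (s : Set ℝ) :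
    ∫ x in s, ‖((x : ℂ) - w)⁻¹‖ ∂μ ≤ √(μ.real s) * √(Inu μ w) := by
  have hmem : MemLp (fun x : ℝ => ‖((x : ℂ) - w)⁻¹‖) (ENNReal.ofReal 2) (μ.restrict s) := by
    rw [ENNReal.ofReal_ofNat, memLp_two_iff_integrable_sq (by fun_prop)]
    refine (hw.integrable_inv_pow 2).norm.restrict.congr (.of_forall fun x => ?_)
    simp only [norm_pow]
  have hcs := integral_mul_le_Lp_mul_Lq_of_nonneg Real.HolderConjugate.two_two
    (μ := μ.restrict s) (f := fun _ => (1 : ℝ)) (.of_forall fun _ => zero_le_one)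
    (.of_forall fun x => norm_nonneg _) (memLp_const 1) hmem
  simp only [one_mul, one_pow, integral_const, smul_eq_mul, mul_one, Real.rpow_two,
    ← Real.sqrt_eq_rpow, measureReal_restrict_apply_univ] at hcs
  refine hcs.trans (mul_le_mul_of_nonneg_left (Real.sqrt_le_sqrt ?_) (Real.sqrt_nonneg _))
  have hsq : ∀ x : ℝ, ‖((x : ℂ) - w)⁻¹‖ ^ 2 = (normSq ((x : ℂ) - w))⁻¹ := fun x => by
    rw [norm_inv, inv_pow, normSq_eq_norm_sq]
  simp_rw [hsq]
  exact setIntegral_le_integral hw.integrable_inv_normSq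
    (.of_forall fun x => inv_nonneg.2 (normSq_nonneg _))

lemma norm_mTr_le_sqrt_mul_sqrt_Inu_add (hw : OffSupport μ w) {ε : ℝ} (hε : 0 < ε)
    (hwx : ‖w - x₀‖ ≤ ε / 2) :
    ‖mTr μ w‖ ≤ √(μ.real (Metric.closedBall x₀ ε)) * √(Inu μ w) + 2 / ε * μ.real univ := by
  have hball : MeasurableSet (Metric.closedBall x₀ ε) := Metric.isClosed_closedBall.measurableSet
  have hint : Integrable (fun x : ℝ => ‖((x : ℂ) - w)⁻¹‖) μ := by
    simpa using (hw.integrable_inv_pow 1).norm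
  have hfar : ∫ x in (Metric.closedBall x₀ ε)ᶜ, ‖((x : ℂ) - w)⁻¹‖ ∂μ ≤ 2 / ε * μ.real univ := by
    calc ∫ x in (Metric.closedBall x₀ ε)ᶜ, ‖((x : ℂ) - w)⁻¹‖ ∂μ
        ≤ ∫ x in (Metric.closedBall x₀ ε)ᶜ, 2 / ε ∂μ := by
          refine setIntegral_mono_on hint.integrableOn (integrable_const _).integrableOn
            hball.compl fun x hx => ?_
          have htri := norm_sub_le_norm_sub_add_norm_sub (x : ℂ) w x₀
          rw [← ofReal_sub, norm_real] at htri
          rw [mem_compl_iff, mem_closedBall_iff_norm, not_le] at hx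
          rw [norm_inv, ← inv_div]
          exact inv_anti₀ (half_pos hε) (by linarith)
      _ ≤ 2 / ε * μ.real univ := by
          rw [setIntegral_const, smul_eq_mul, mul_comm]
          exact mul_le_mul_of_nonneg_left (measureReal_mono (subset_univ _)) (by positivity)
  calc ‖mTr μ w‖ ≤ ∫ x : ℝ, ‖((x : ℂ) - w)⁻¹‖ ∂μ := norm_integral_le_integral_norm _
    _ = ∫ x in Metric.closedBall x₀ ε, ‖((x : ℂ) - w)⁻¹‖ ∂μ
        + ∫ x in (Metric.closedBall x₀ ε)ᶜ, ‖((x : ℂ) - w)⁻¹‖ ∂μ :=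
      (integral_add_compl hball hint).symm
    _ ≤ _ := add_le_add (setIntegral_norm_inv_le_sqrt hw _) hfar

lemma exists_measureReal_closedBall_lt {q : ℝ} (hq : μ.real {x₀} < q) :
    ∃ ε > 0, μ.real (Metric.closedBall x₀ ε) < q := by
  have hlim := (ENNReal.tendsto_toReal (measure_ne_top μ {x₀})).comp
    (tendsto_measure_cthickening_of_isClosed (μ := μ) (s := {x₀})
      ⟨1, one_pos, measure_ne_top _ _⟩ isClosed_singleton)
  obtain ⟨ε, hlt, hε : 0 < ε⟩ := (((hlim.mono_left (nhdsWithin_le_nhds (s := Ioi 0))).eventually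
    (gt_mem_nhds hq)).and self_mem_nhdsWithin).exists
  rw [Function.comp_apply, Metric.cthickening_singleton _ hε.le] at hlt
  exact ⟨ε, hε, hlt⟩

/-- The Cauchy–Schwarz inequality `‖m‖ ≤ √p √I + O(1)`, with `p < q` the mass of a small ball, is
incompatible with `√q √I ≤ ‖m‖` for large `I`. -/
lemma exists_eventually_Inu_le_of_measureReal_singleton_lt {q : ℝ} (hq : μ.real {x₀} < q) :
    ∃ B, ∀ᶠ w in 𝓝 (x₀ : ℂ), OffSupport μ w → q * Inu μ w ≤ ‖mTr μ w‖ ^ 2 → Inu μ w ≤ B := by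
  obtain ⟨ε, hε, hball⟩ := exists_measureReal_closedBall_lt hq
  set p := μ.real (Metric.closedBall x₀ ε)
  have hgap : 0 < √q - √p := sub_pos.2 (Real.sqrt_lt_sqrt measureReal_nonneg hball)
  refine ⟨(2 / ε * μ.real univ / (√q - √p)) ^ 2, ?_⟩
  filter_upwards [Metric.closedBall_mem_nhds _ (half_pos hε)] with w hwx hw hle
  have hlower : √q * √(Inu μ w) ≤ ‖mTr μ w‖ := by
    rw [← Real.sqrt_mul (measureReal_nonneg.trans hq.le)]
    exact Real.sqrt_le_left (norm_nonneg _) |>.2 hle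
  have hupper := norm_mTr_le_sqrt_mul_sqrt_Inu_add hw hε (mem_closedBall_iff_norm.1 hwx)
  refine (Real.sqrt_le_left ?_).1 ((le_div_iff₀ hgap).2 ?_)
  · positivity
  · linarith

lemma HasThickSupport.notMem_support_of_frequently_Inu_le (hμ : HasThickSupport μ) {B : ℝ}
    (hB : ∃ᶠ w in 𝓝 (x₀ : ℂ), OffSupport μ w ∧ Inu μ w ≤ B) : x₀ ∉ μ.support := by
  refine fun hx₀ => hμ x₀ hx₀ (Asymptotics.IsBigO.of_bound (2 ^ 2 * B) ?_)
  filter_upwards [self_mem_nhdsWithin] with h (hh : 0 < h)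
  obtain ⟨w, ⟨hw, hle⟩, hwx⟩ := (hB.and_eventually (Metric.closedBall_mem_nhds _ hh)).exists
  rw [Real.norm_of_nonneg measureReal_nonneg, Real.norm_of_nonneg (sq_nonneg h)]
  calc μ.real (Metric.closedBall x₀ h) ≤ (2 * h) ^ 2 * Inu μ w :=
        measureReal_closedBall_le_mul_Inu hw (mem_closedBall_iff_norm.1 hwx)
    _ ≤ (2 * h) ^ 2 * B := mul_le_mul_of_nonneg_left hle (sq_nonneg _)
    _ = 2 ^ 2 * B * h ^ 2 := by ring

end Concentration

lemma OffSupport.mTr_ne_zero {μ : Measure ℝ} [IsFiniteMeasure μ] [NeZero μ] {w : ℂ}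
    (hw : OffSupport μ w) (him : w.im ≠ 0) : mTr μ w ≠ 0 := by
  intro h
  have hprod := hw.im_mTr
  rw [h, zero_im, zero_eq_mul] at hprod
  exact hprod.elim him hw.Inu_pos.ne'

lemma neBot_nhdsWithin_upperHalfPlane (E : ℝ) : (𝓝[{z : ℂ | 0 < z.im}] (E : ℂ)).NeBot := by
  rw [← mem_closure_iff_nhdsWithin_neBot, Complex.closure_setOfPred_lt_im]
  simp

namespace IsSubordination

variable {μ : Measure ℝ} {t : ℝ} {ω : ℂ → ℂ}

lemma tendsto_nhdsWithin (hω : IsSubordination μ t ω) (E : ℝ) :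
    Tendsto ω (𝓝[{z | 0 < z.im}] E) (𝓝 (ω E)) :=
  (hω.contOn E (by simp)).mono fun z (hz : 0 < z.im) => hz.le

lemma im_pos (hω : IsSubordination μ t ω) {z : ℂ} (hz : 0 < z.im) : 0 < (ω z).im :=
  hz.trans_le (hω.im_ge z hz)

lemma offSupport (hω : IsSubordination μ t ω) {z : ℂ} (hz : 0 < z.im) : OffSupport μ (ω z) :=
  offSupport_of_im_ne_zero μ (hω.im_pos hz).ne'

variable [IsFiniteMeasure μ] [NeZero μ]

lemma sub_mul_mTr (hω : IsSubordination μ t ω) {z : ℂ} (hz : 0 < z.im) :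
    (t * ω z - z) * mTr μ (ω z) = 1 - t := by
  have hm := (hω.offSupport hz).mTr_ne_zero (hω.im_pos hz).ne'
  rw [hω.subord z hz, FTr]
  push_cast
  field_simp
  ring

lemma sub_one_mul_Inu_le (hω : IsSubordination μ t ω) {z : ℂ} (hz : 0 < z.im) :
    (t - 1) * Inu μ (ω z) ≤ t * ‖mTr μ (ω z)‖ ^ 2 := by
  have hm := normSq_pos.2 ((hω.offSupport hz).mTr_ne_zero (hω.im_pos hz).ne')
  have him := congrArg im (hω.subord z hz)
  rw [sub_im, im_ofReal_mul, im_ofReal_mul, FTr, neg_im, inv_im, (hω.offSupport hz).im_mTr,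
    neg_div, neg_neg, ← mul_div_assoc, eq_div_iff hm.ne'] at him
  rw [← normSq_eq_norm_sq]
  refine le_of_mul_le_mul_left ?_ (hω.im_pos hz)
  linarith [mul_pos hz hm]

lemma one_sub_inv_mul_Inu_le (hω : IsSubordination μ t ω) (ht : 0 < t) {z : ℂ} (hz : 0 < z.im) :
    (1 - 1 / t) * Inu μ (ω z) ≤ ‖mTr μ (ω z)‖ ^ 2 := by
  refine le_of_mul_le_mul_left ?_ ht
  rw [← mul_assoc, mul_one_sub, mul_one_div_cancel ht.ne']
  exact hω.sub_one_mul_Inu_le hz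

lemma tendsto_mTr (hω : IsSubordination μ t ω) {E : ℝ} (hE : t * ω E ≠ E) :
    Tendsto (fun z => mTr μ (ω z)) (𝓝[{z | 0 < z.im}] (E : ℂ)) (𝓝 ((1 - t) / (t * ω E - E))) := by
  have hden : Tendsto (fun z => t * ω z - z) (𝓝[{z | 0 < z.im}] (E : ℂ)) (𝓝 (t * ω E - E)) :=
    ((hω.tendsto_nhdsWithin E).const_mul _).sub (tendsto_id.mono_left nhdsWithin_le_nhds)
  have hne : t * ω E - E ≠ 0 := sub_ne_zero.2 hE
  refine (tendsto_const_nhds.div hden hne).congr' ?_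
  filter_upwards [hden.eventually_ne hne, self_mem_nhdsWithin] with z hz him
  rw [Pi.div_apply, ← hω.sub_mul_mTr him, mul_div_cancel_left₀ _ hz]

lemma exists_eventually_Inu_le (hω : IsSubordination μ t ω) (ht : 1 < t) {E x₀ : ℝ}
    (hE : ω E = x₀) (hatom : μ.real {E / t} < 1 - 1 / t) :
    ∃ B, ∀ᶠ z in 𝓝[{z | 0 < z.im}] (E : ℂ), Inu μ (ω z) ≤ B := by
  have ht0 : 0 < t := by linarith
  rcases eq_or_ne x₀ (E / t) with rfl | hne
  · obtain ⟨B, hB⟩ := exists_eventually_Inu_le_of_measureReal_singleton_lt hatom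
    refine ⟨B, ?_⟩
    filter_upwards [(hE ▸ hω.tendsto_nhdsWithin E).eventually hB, self_mem_nhdsWithin] with z hz him
      using hz (hω.offSupport him) (hω.one_sub_inv_mul_Inu_le ht0 him)
  · have hne' : t * ω E ≠ E := by
      rw [hE, ← ofReal_mul, Ne, ofReal_inj]
      exact fun h => hne (eq_div_of_mul_eq ht0.ne' (by rw [mul_comm, h]))
    have hq : 0 < 1 - 1 / t := sub_pos.2 ((div_lt_one ht0).2 ht)
    obtain ⟨C, hC⟩ := (hω.tendsto_mTr hne').norm.isBoundedUnder_le
    refine ⟨C ^ 2 / (1 - 1 / t), ?_⟩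
    filter_upwards [eventually_map.1 hC, self_mem_nhdsWithin] with z hz him
    refine (le_div_iff₀' hq).2 ((hω.one_sub_inv_mul_Inu_le ht0 him).trans ?_)
    gcongr

lemma offSupport_ofReal (hω : IsSubordination μ t ω) (hμ : HasThickSupport μ) (ht : 1 < t) {E : ℝ}
    (hatom : μ.real {E / t} < 1 - 1 / t) : OffSupport μ (ω E) := by
  by_cases him : (ω E).im = 0
  · obtain ⟨x₀, hx₀⟩ : ∃ x₀ : ℝ, ω E = x₀ := ⟨(ω E).re, Complex.ext rfl (by simpa using him)⟩
    obtain ⟨B, hB⟩ := hω.exists_eventually_Inu_le ht hx₀ hatom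
    have := neBot_nhdsWithin_upperHalfPlane E
    rw [hx₀]
    refine offSupport_ofReal_of_notMem_support
      (hμ.notMem_support_of_frequently_Inu_le (B := B) ?_)
    refine (hx₀ ▸ hω.tendsto_nhdsWithin E).frequently (Eventually.frequently ?_)
    filter_upwards [hB, self_mem_nhdsWithin] with z hz hz0 using ⟨hω.offSupport hz0, hz⟩
  · exact offSupport_of_im_ne_zero μ him

end IsSubordination

/-! ### The inverse of the subordination function -/

/-- The function `φ(w) = t w - (t - 1) F_μ(w)`, which inverts the subordination function of `μ` at
time `t`. -/
def freePowerInverse (μ : Measure ℝ) (t : ℝ) (w : ℂ) : ℂ := t * w - (t - 1) * FTr μ w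

lemma freePowerInverse_conj (μ : Measure ℝ) (t : ℝ) (w : ℂ) :
    freePowerInverse μ t ((starRingEnd ℂ) w) = (starRingEnd ℂ) (freePowerInverse μ t w) := by
  simp only [freePowerInverse, FTr, mTr_conj, map_sub, map_mul, map_neg, map_inv₀, conj_ofReal,
    map_one]

namespace IsSubordination

variable {μ : Measure ℝ} {t : ℝ} {ω : ℂ → ℂ}

lemma freePowerInverse_apply_of_im_pos (hω : IsSubordination μ t ω) {z : ℂ} (hz : 0 < z.im) :
    freePowerInverse μ t (ω z) = z := by
  have hsub := hω.subord z hz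
  push_cast at hsub
  rw [freePowerInverse, ← hsub]
  ring

variable [IsFiniteMeasure μ] [NeZero μ]

lemma sub_mul_mTr_of_offSupport (hω : IsSubordination μ t ω) {E : ℝ} (hE : OffSupport μ (ω E)) :
    (t * ω E - E) * mTr μ (ω E) = 1 - t := by
  have := neBot_nhdsWithin_upperHalfPlane E
  have hlim := ((hω.tendsto_nhdsWithin E).const_mul (t : ℂ)).sub
    (tendsto_id.mono_left nhdsWithin_le_nhds) |>.mul
    (hE.hasDerivAt_mTr.continuousAt.tendsto.comp (hω.tendsto_nhdsWithin E))
  refine tendsto_nhds_unique hlim (tendsto_const_nhds.congr' ?_)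
  filter_upwards [self_mem_nhdsWithin] with z hz using (hω.sub_mul_mTr hz).symm

lemma mTr_ne_zero (hω : IsSubordination μ t ω) (ht : t ≠ 1) {E : ℝ} (hE : OffSupport μ (ω E)) :
    mTr μ (ω E) ≠ 0 := by
  have hprod : (t * ω E - E) * mTr μ (ω E) ≠ 0 := by
    rw [hω.sub_mul_mTr_of_offSupport hE, sub_ne_zero]
    exact_mod_cast ht.symm
  exact right_ne_zero_of_mul hprod

lemma freePowerInverse_apply (hω : IsSubordination μ t ω) (ht : t ≠ 1) {E : ℝ}
    (hE : OffSupport μ (ω E)) : freePowerInverse μ t (ω E) = E := by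
  have hm := hω.mTr_ne_zero ht hE
  have hprod := hω.sub_mul_mTr_of_offSupport hE
  rw [freePowerInverse, FTr]
  field_simp
  linear_combination hprod

end IsSubordination

namespace OffSupport

variable {μ : Measure ℝ} [IsFiniteMeasure μ] {w : ℂ} (t : ℝ)

lemma eventually_mTr_ne_zero (hw : OffSupport μ w) (hm : mTr μ w ≠ 0) :
    ∀ᶠ v in 𝓝 w, mTr μ v ≠ 0 :=
  hw.hasDerivAt_mTr.continuousAt.eventually_ne hm

lemma hasDerivAt_freePowerInverse (hw : OffSupport μ w) (hm : mTr μ w ≠ 0) :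
    HasDerivAt (freePowerInverse μ t) (t - (t - 1) * (invMoment μ 2 w / mTr μ w ^ 2)) w := by
  refine (((hasDerivAt_id' w).const_mul (t : ℂ)).sub
    ((hw.hasDerivAt_mTr.fun_inv hm).fun_neg.const_mul (t - 1 : ℂ))).congr_deriv ?_
  ring

lemma analyticAt_freePowerInverse (hw : OffSupport μ w) (hm : mTr μ w ≠ 0) :
    AnalyticAt ℂ (freePowerInverse μ t) w := by
  refine analyticAt_iff_eventually_differentiableAt.2 ?_
  filter_upwards [hw.eventually, hw.eventually_mTr_ne_zero hm] with v hv hmv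
    using (hv.hasDerivAt_freePowerInverse t hmv).differentiableAt

lemma hasDerivAt_deriv_freePowerInverse (hw : OffSupport μ w) (hm : mTr μ w ≠ 0) :
    HasDerivAt (deriv (freePowerInverse μ t))
      (-(2 * (t - 1)) * ((mTr μ w * invMoment μ 3 w - invMoment μ 2 w ^ 2) / mTr μ w ^ 3)) w := by
  have hderiv := ((hw.hasDerivAt_invMoment 2).fun_div (hw.hasDerivAt_mTr.fun_pow 2)
    (pow_ne_zero 2 hm)).const_mul (t - 1 : ℂ) |>.const_sub (t : ℂ)
  refine (hderiv.congr_deriv ?_).congr_of_eventuallyEq ?_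
  · field_simp
    push_cast
    ring
  · filter_upwards [hw.eventually, hw.eventually_mTr_ne_zero hm] with v hv hmv
      using (hv.hasDerivAt_freePowerInverse t hmv).deriv

lemma hasDerivAt_deriv_deriv_freePowerInverse (hw : OffSupport μ w) (hm : mTr μ w ≠ 0) :
    HasDerivAt (deriv (deriv (freePowerInverse μ t)))
      (-(6 * (t - 1)) * ((mTr μ w ^ 2 * invMoment μ 4 w - 2 * mTr μ w * invMoment μ 2 w
        * invMoment μ 3 w + invMoment μ 2 w ^ 3) / mTr μ w ^ 4)) w := by
  have hderiv := (((hw.hasDerivAt_mTr.fun_mul (hw.hasDerivAt_invMoment 3)).fun_sub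
    ((hw.hasDerivAt_invMoment 2).fun_pow 2)).fun_div (hw.hasDerivAt_mTr.fun_pow 3)
    (pow_ne_zero 3 hm)).const_mul (-(2 * (t - 1)) : ℂ)
  refine (hderiv.congr_deriv ?_).congr_of_eventuallyEq ?_
  · field_simp
    push_cast
    ring
  · filter_upwards [hw.eventually, hw.eventually_mTr_ne_zero hm] with v hv hmv
      using (hv.hasDerivAt_deriv_freePowerInverse t hmv).deriv

end OffSupport

section RealPoint

variable {μ : Measure ℝ} {a : ℝ}

lemma mTr_ofReal (μ : Measure ℝ) (a : ℝ) : mTr μ a = ((∫ x : ℝ, (x - a)⁻¹ ∂μ : ℝ) : ℂ) := by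
  simp_rw [← invMoment_one, invMoment_ofReal, pow_one]

lemma OffSupport.integrable_inv_pow_ofReal [IsFiniteMeasure μ] (ha : OffSupport μ a) (k : ℕ) :
    Integrable (fun x : ℝ => ((x - a)⁻¹) ^ k) μ := by
  refine (ha.integrable_inv_pow k).re.congr (.of_forall fun x => ?_)
  rw [RCLike.re_eq_complex_re]
  exact_mod_cast ofReal_re _

lemma OffSupport.invMoment_two_pos [IsFiniteMeasure μ] [NeZero μ] (ha : OffSupport μ a) :
    ∃ b : ℝ, 0 < b ∧ invMoment μ 2 a = b := by
  refine ⟨Inu μ a, ha.Inu_pos, ?_⟩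
  rw [invMoment_ofReal, Inu]
  congr with x
  rw [← ofReal_sub, normSq_ofReal, inv_pow, sq]

end RealPoint

/-- The left-hand side is `∫ y² (M₁ y - M₂)²`, where `Mₖ = ∫ yᵏ`; if it vanished then `M₁ y = M₂`
almost surely, and integrating gives `M₁² = M₂`. -/
lemma moment_combination_pos {Ω : Type*} [MeasurableSpace Ω] {P : Measure Ω}
    [IsProbabilityMeasure P] {y : Ω → ℝ} (hint : ∀ k, Integrable (fun x => y x ^ k) P)
    (hy : ∀ᵐ x ∂P, y x ≠ 0) (hvar : ∫ x, y x ^ 2 ∂P ≠ (∫ x, y x ∂P) ^ 2) :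
    0 < (∫ x, y x ∂P) ^ 2 * ∫ x, y x ^ 4 ∂P
      - 2 * (∫ x, y x ∂P) * (∫ x, y x ^ 2 ∂P) * ∫ x, y x ^ 3 ∂P + (∫ x, y x ^ 2 ∂P) ^ 3 := by
  set M₁ := ∫ x, y x ∂P
  set M₂ := ∫ x, y x ^ 2 ∂P
  have hexpand : (fun x => y x ^ 2 * (M₁ * y x - M₂) ^ 2)
      = fun x => M₁ ^ 2 * y x ^ 4 - 2 * M₁ * M₂ * y x ^ 3 + M₂ ^ 2 * y x ^ 2 := by
    ext x
    ring
  have h43 : Integrable (fun x => M₁ ^ 2 * y x ^ 4 - 2 * M₁ * M₂ * y x ^ 3) P :=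
    ((hint 4).const_mul (M₁ ^ 2)).sub ((hint 3).const_mul (2 * M₁ * M₂))
  have hval : ∫ x, y x ^ 2 * (M₁ * y x - M₂) ^ 2 ∂P = M₁ ^ 2 * ∫ x, y x ^ 4 ∂P
      - 2 * M₁ * M₂ * ∫ x, y x ^ 3 ∂P + M₂ ^ 3 := by
    rw [hexpand, integral_add h43 ((hint 2).const_mul _), integral_sub ((hint 4).const_mul _)
      ((hint 3).const_mul _), integral_const_mul, integral_const_mul, integral_const_mul]
    ring
  have hint' : Integrable (fun x => y x ^ 2 * (M₁ * y x - M₂) ^ 2) P := by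
    rw [hexpand]
    exact h43.add ((hint 2).const_mul _)
  have hnonneg : 0 ≤ fun x => y x ^ 2 * (M₁ * y x - M₂) ^ 2 := fun x => by positivity
  rw [← hval]
  refine (integral_nonneg hnonneg).lt_of_ne' fun hzero => hvar ?_
  have hconst : ∀ᵐ x ∂P, M₁ * y x = M₂ := by
    filter_upwards [(integral_eq_zero_iff_of_nonneg hnonneg hint').1 hzero, hy] with x hx hyx
    simpa [hyx, sub_eq_zero] using hx
  simpa [integral_const_mul, M₁, sq] using (integral_congr_ae hconst).symm

lemma deriv_deriv_deriv_freePowerInverse_neg {μ : Measure ℝ} [IsProbabilityMeasure μ] {t a : ℝ}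
    (ht : 1 < t) (ha : OffSupport μ a) (hm : mTr μ a ≠ 0)
    (hcrit : deriv (freePowerInverse μ t) a = 0) :
    ∃ c < (0 : ℝ), deriv (deriv (deriv (freePowerInverse μ t))) a = c := by
  rw [(ha.hasDerivAt_freePowerInverse t hm).deriv] at hcrit
  rw [(ha.hasDerivAt_deriv_deriv_freePowerInverse t hm).deriv]
  simp only [invMoment_ofReal, mTr_ofReal] at hm hcrit ⊢
  norm_cast at hm hcrit ⊢
  have hvar : ∫ x, ((x - a)⁻¹) ^ 2 ∂μ ≠ (∫ x, (x - a)⁻¹ ∂μ) ^ 2 := by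
    intro heq
    rw [heq, div_self (pow_ne_zero 2 hm)] at hcrit
    linarith
  have hne : ∀ᵐ x ∂μ, (x - a)⁻¹ ≠ 0 := by
    obtain ⟨r, hr, hae⟩ := ha
    filter_upwards [hae] with x hx
    rw [← ofReal_sub, norm_real] at hx
    exact inv_ne_zero (norm_pos_iff.1 (hr.trans_le hx))
  have hpos := moment_combination_pos ha.integrable_inv_pow_ofReal hne hvar
  refine ⟨_, mul_neg_of_neg_of_pos ?_ (div_pos hpos (by positivity)), rfl⟩
  linarith

/-! ### Conjugation-symmetric functions at a real point -/

section ConjugationSymmetric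

open scoped ComplexConjugate

variable {f : ℂ → ℂ} {a c : ℝ}

lemma isLittleO_im_sub_mul_im (hf : HasStrictDerivAt f c a)
    (hconj : ∀ᶠ z in 𝓝 (a : ℂ), f (conj z) = conj (f z)) :
    (fun z => (f z).im - c * z.im) =o[𝓝 (a : ℂ)] im := by
  have hpair : Tendsto (fun z : ℂ => (z, conj z)) (𝓝 a) (𝓝 ((a : ℂ), (a : ℂ))) := by
    rw [nhds_prod_eq]
    refine tendsto_id.prodMk ?_
    simpa only [conj_ofReal] using continuous_conj.tendsto (a : ℂ)
  have hsub : ∀ z : ℂ, z - conj z = (2 * I) * (z.im : ℂ) := fun z => by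
    rw [Complex.sub_conj]
    push_cast
    ring
  have hlin := hf.hasStrictFDerivAt.isLittleO.comp_tendsto hpair
  have hlin' : (fun z => (2 * I) * (((f z).im - c * z.im : ℝ) : ℂ)) =o[𝓝 (a : ℂ)]
      fun z => (2 * I) * (z.im : ℂ) := by
    refine hlin.congr' ?_ (.of_forall hsub)
    filter_upwards [hconj] with z hz
    simp only [Function.comp_apply, ContinuousLinearMap.toSpanSingleton_apply, smul_eq_mul, hz,
      hsub]
    push_cast
    ring
  have hI : (2 * I : ℂ) ≠ 0 := by simp
  rwa [Asymptotics.isLittleO_const_mul_left_iff hI, Asymptotics.isLittleO_const_mul_right_iff hI,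
    isLittleO_ofReal_left, isLittleO_ofReal_right] at hlin'

lemma eventually_exists_pos_im_eq_mul (hc : c ≠ 0) (hf : HasStrictDerivAt f c a)
    (hconj : ∀ᶠ z in 𝓝 (a : ℂ), f (conj z) = conj (f z)) :
    ∀ᶠ z in 𝓝 (a : ℂ), ∃ θ > (0 : ℝ), (f z).im = θ * (c * z.im) := by
  have hequiv : Asymptotics.IsEquivalent (𝓝 (a : ℂ)) (fun z => (f z).im) fun z => c * z.im :=
    (Asymptotics.isLittleO_const_mul_right_iff hc).2 (isLittleO_im_sub_mul_im hf hconj)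
  obtain ⟨θ, hθ, hfθ⟩ := hequiv.exists_eq_mul
  filter_upwards [hθ.eventually_const_lt one_pos, hfθ] with z hpos hz using ⟨θ z, hpos, hz⟩

lemma exists_eq_add_sq_mul_of_deriv_eq_zero {f : ℂ → ℂ} {a : ℂ} (hf : AnalyticAt ℂ f a)
    (hcrit : deriv f a = 0) :
    ∃ k : ℂ → ℂ, AnalyticAt ℂ k a ∧ k a = deriv (deriv f) a / 2 ∧
      ∀ z, f z = f a + (z - a) ^ 2 * k z := by
  have hshift : AnalyticAt ℂ (fun u => f (a + u)) 0 :=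
    AnalyticAt.fun_comp (by rwa [add_zero]) (by fun_prop)
  obtain ⟨F, hF, hTaylor⟩ := hshift.exists_eq_sum_add_pow_mul 3
  have hF' : AnalyticAt ℂ (fun z => F (z - a)) a :=
    AnalyticAt.fun_comp (by rwa [sub_self]) (by fun_prop)
  refine ⟨fun z => deriv (deriv f) a / 2 + (z - a) * F (z - a),
    analyticAt_const.fun_add (.fun_mul (by fun_prop) hF'), by simp, fun z => ?_⟩
  have hz := hTaylor (z - a)
  simp only [iteratedDeriv_comp_const_add, Finset.sum_range_succ, Finset.sum_range_zero,
    iteratedDeriv_succ, iteratedDeriv_zero, add_zero, add_sub_cancel, hcrit, smul_eq_mul] at hz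
  rw [hz]
  norm_num
  ring

lemma exists_eq_add_mul_sq {A : ℝ} (hA : A ≠ 0) (hf : AnalyticAt ℂ f a)
    (hconj : ∀ z, f (conj z) = conj (f z)) (hcrit : deriv f a = 0)
    (hderiv : deriv (deriv f) a = 2 * A) :
    ∃ ψ : ℂ → ℂ, AnalyticAt ℂ ψ a ∧ ψ a = 0 ∧ deriv ψ a = 1 ∧
      (∀ᶠ z in 𝓝 (a : ℂ), ψ (conj z) = conj (ψ z)) ∧
      ∀ z, f z = f a + A * ψ z ^ 2 := by
  obtain ⟨k, hk, hka, hfk⟩ := exists_eq_add_sq_mul_of_deriv_eq_zero hf hcrit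
  have hkA : k a = A := by rw [hka, hderiv, mul_div_cancel_left₀ _ two_ne_zero]
  have hAC : (A : ℂ) ≠ 0 := ofReal_ne_zero.2 hA
  have hfa : conj (f a) = f a := by rw [← hconj, conj_ofReal]
  have hkconj : ∀ z, k (conj z) = conj (k z) := fun z => by
    rcases eq_or_ne z a with rfl | hz
    · rw [conj_ofReal, hkA, conj_ofReal]
    have hsq := hconj z
    rw [hfk, hfk z, map_add, hfa, map_mul, map_pow, map_sub, conj_ofReal] at hsq
    refine mul_left_cancel₀ (pow_ne_zero 2 (sub_ne_zero.2 fun h => hz ?_)) (add_left_cancel hsq)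
    rw [← conj_conj z, h, conj_ofReal]
  have hslit : k a / A ∈ slitPlane := by simp [hkA, hAC]
  have hs : AnalyticAt ℂ (fun z => (k z / A) ^ (2⁻¹ : ℂ)) a :=
    (hk.fun_div analyticAt_const hAC).cpow analyticAt_const hslit
  have hsa : (k a / A) ^ (2⁻¹ : ℂ) = 1 := by rw [hkA, div_self hAC, one_cpow]
  refine ⟨fun z => (z - a) * (k z / A) ^ (2⁻¹ : ℂ), .fun_mul (by fun_prop) hs, by simp, ?_, ?_,
    fun z => ?_⟩
  · have hψ := ((hasDerivAt_id' (a : ℂ)).sub_const (a : ℂ)).fun_mul hs.differentiableAt.hasDerivAt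
    rw [hψ.deriv, sub_self, zero_mul, add_zero, one_mul, hsa]
  · have hnear : ∀ᶠ z in 𝓝 (a : ℂ), k z / A ∈ slitPlane :=
      (hk.continuousAt.div_const _).eventually_mem (isOpen_slitPlane.mem_nhds hslit)
    filter_upwards [hnear] with z hz
    have hroot : conj ((k z / A) ^ (2⁻¹ : ℂ)) = (conj (k z / A)) ^ (2⁻¹ : ℂ) := by
      rw [conj_cpow _ _ (mem_slitPlane_iff_arg.1 hz).1, map_inv₀, map_ofNat]
    rw [map_mul, hroot, map_sub, map_div₀, conj_ofReal, conj_ofReal, hkconj]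
  · simp only [hfk z, mul_pow, cpow_ofNat_inv_pow]
    field_simp

lemma deriv_conj_of_forall_conj (hconj : ∀ z, f (conj z) = conj (f z)) (z : ℂ) :
    deriv f (conj z) = conj (deriv f z) := by
  have hf : f = conj ∘ f ∘ conj := funext fun w => by simp [hconj]
  conv_lhs => rw [hf, deriv_conj_conj]
  simp only [Function.comp_apply, conj_conj]

lemma exists_ofReal_eq_of_forall_conj (hconj : ∀ z, f (conj z) = conj (f z)) (a : ℝ) :
    ∃ c : ℝ, f a = c := by
  rw [← conj_eq_iff_real, ← hconj, conj_ofReal]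

end ConjugationSymmetric

lemma isBigO_sub_sub_deriv_mul_sq {g ψ : ℂ → ℂ} {a : ℂ} (hg : AnalyticAt ℂ g a)
    (hψ : AnalyticAt ℂ ψ a) (hψa : ψ a = 0) (hψ' : deriv ψ a = 1) :
    (fun z => g z - g a - deriv g a * ψ z) =O[𝓝 a] fun z => ψ z ^ 2 := by
  have hderiv : deriv (fun z => g z - deriv g a * ψ z) a = 0 := by
    rw [(hg.differentiableAt.hasDerivAt.fun_sub
      (hψ.differentiableAt.hasDerivAt.const_mul _)).deriv, hψ', mul_one, sub_self]
  obtain ⟨k, hk, -, hgk⟩ :=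
    exists_eq_add_sq_mul_of_deriv_eq_zero (hg.fun_sub (analyticAt_const.fun_mul hψ)) hderiv
  have hsub : (fun z => z - a) =O[𝓝 a] ψ := by
    have hrev := (hψ.hasStrictDerivAt.isTheta_sub (by simp [hψ'])).2.comp_tendsto
      ((continuous_id.prodMk continuous_const).tendsto a)
    exact hrev.congr_right fun z => by simp [hψa]
  have hprod := (hsub.pow 2).mul (hk.continuousAt.isBigO_one ℂ)
  refine hprod.congr (fun z => ?_) fun z => mul_one _
  have hz := hgk z
  rw [hψa] at hz
  linear_combination -hz

/-! ### The density of the free convolution power -/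

section Density

variable {μ ν : Measure ℝ} {t : ℝ} {ω : ℂ → ℂ}

lemma IsSubordination.continuous_comp_ofReal (hω : IsSubordination μ t ω) :
    Continuous fun E : ℝ => ω E :=
  hω.contOn.comp_continuous continuous_ofReal fun _ => by simp

lemma IsSubordination.isOpen_setOf_offSupport (hω : IsSubordination μ t ω) :
    IsOpen {E : ℝ | OffSupport μ (ω E)} :=
  (isOpen_iff_mem_nhds.2 fun _ hw => OffSupport.eventually hw).preimage hω.continuous_comp_ofReal

variable [IsFiniteMeasure μ]

lemma IsFreePower.tendstoLocallyUniformlyOn_im_mTr (hν : IsFreePower μ t ω ν)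
    (hω : IsSubordination μ t ω) :
    TendstoLocallyUniformlyOn (fun (η x : ℝ) => (mTr ν (x + η * I)).im)
      (fun E : ℝ => (mTr μ (ω E)).im) (𝓝[>] 0) {E : ℝ | OffSupport μ (ω E)} := by
  refine tendstoLocallyUniformlyOn_iff_forall_tendsto.2 fun E hE => ?_
  have hm : Tendsto (fun w => (mTr μ w).im) (𝓝 (ω E)) (𝓝 (mTr μ (ω E)).im) :=
    (continuous_im.continuousAt.comp hE.hasDerivAt_mTr.continuousAt).tendsto
  have hpoint : Tendsto (fun p : ℝ × ℝ => (p.2 : ℂ) + p.1 * I) (𝓝[>] 0 ×ˢ 𝓝 E)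
      (𝓝[{z : ℂ | 0 < z.im}] E) := by
    refine tendsto_nhdsWithin_iff.2 ⟨?_, ?_⟩
    · have hcont : Continuous fun p : ℝ × ℝ => (p.2 : ℂ) + p.1 * I := by fun_prop
      have hlim := (hcont.tendsto (0, E)).mono_left
        (nhds_prod_eq.ge.trans' (prod_mono_left (𝓝 E) (nhdsWithin_le_nhds (s := Ioi (0 : ℝ)))))
      simpa using hlim
    · filter_upwards [prod_mem_prod self_mem_nhdsWithin univ_mem] with p hp
      simpa using hp.1
  have hF : Tendsto (fun p : ℝ × ℝ => (mTr ν (p.2 + p.1 * I)).im) (𝓝[>] 0 ×ˢ 𝓝 E)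
      (𝓝 (mTr μ (ω E)).im) := by
    refine (hm.comp ((hω.tendsto_nhdsWithin E).comp hpoint)).congr' ?_
    filter_upwards [hpoint.eventually self_mem_nhdsWithin] with p hp
    rw [hν.2 _ hp, Function.comp_apply, Function.comp_apply]
  have hg : Tendsto (fun p : ℝ × ℝ => (mTr μ (ω p.2)).im) (𝓝[>] 0 ×ˢ 𝓝 E)
      (𝓝 (mTr μ (ω E)).im) :=
    hm.comp ((hω.continuous_comp_ofReal.tendsto E).comp tendsto_snd)
  exact ((hg.prodMk_nhds hF).mono_right (nhds_le_uniformity _)).mono_left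
    (prod_mono_right _ nhdsWithin_le_nhds)

lemma IsFreePower.density_eq (hν : IsFreePower μ t ω ν) (hω : IsSubordination μ t ω)
    {ρ : ℝ → ENNReal} (hρc : Continuous ρ) (hρ : ν.rnDeriv volume =ᵐ[volume] ρ) {E : ℝ}
    (hE : OffSupport μ (ω E)) : ρ E = ENNReal.ofReal ((mTr μ (ω E)).im / Real.pi) := by
  have := hν.1
  exact eqOn_of_rnDeriv_ae_eq_of_tendstoLocallyUniformlyOn_im_mTr
    (hν.tendstoLocallyUniformlyOn_im_mTr hω) hω.isOpen_setOf_offSupport hρc hρ hE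

end Density

/-! ### The subordination function at an edge -/

namespace IsSubordination

variable {μ : Measure ℝ} {t : ℝ} {ω : ℂ → ℂ} {E a : ℝ}

lemma im_nonneg (hω : IsSubordination μ t ω) (E : ℝ) : 0 ≤ (ω E).im :=
  hω.mapsTo E (by simp)

lemma im_eq_zero_of_frequently (hω : IsSubordination μ t ω)
    (hfreq : ∃ᶠ E' : ℝ in 𝓝 E, (ω E').im = 0) : (ω E).im = 0 :=
  (isClosed_eq (continuous_im.comp hω.continuous_comp_ofReal) continuous_const
    ).mem_of_frequently_of_tendsto hfreq tendsto_id

lemma eventually_offSupport (hω : IsSubordination μ t ω) (hE : OffSupport μ (ω E)) :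
    ∀ᶠ E' : ℝ in 𝓝 E, OffSupport μ (ω E') :=
  hω.isOpen_setOf_offSupport.mem_nhds hE

variable [IsFiniteMeasure μ] [NeZero μ]

lemma hasStrictDerivAt_freePowerInverse (hω : IsSubordination μ t ω) (ht : t ≠ 1)
    (hωE : ω E = a) (ha : OffSupport μ a) :
    ∃ c : ℝ, deriv (freePowerInverse μ t) a = c ∧ HasStrictDerivAt (freePowerInverse μ t) c a := by
  obtain ⟨c, hc⟩ := exists_ofReal_eq_of_forall_conj
    (deriv_conj_of_forall_conj (freePowerInverse_conj μ t)) a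
  exact ⟨c, hc, hc ▸ (ha.analyticAt_freePowerInverse t
    (hωE ▸ hω.mTr_ne_zero ht (hωE ▸ ha))).hasStrictDerivAt⟩

/-- Otherwise `φ` would reverse the sign of imaginary parts near `a`, contradicting `φ (ω z) = z`
in the upper half-plane. -/
lemma re_deriv_freePowerInverse_nonneg (hω : IsSubordination μ t ω) (ht : t ≠ 1)
    (hωE : ω E = a) (ha : OffSupport μ a) : 0 ≤ (deriv (freePowerInverse μ t) a).re := by
  obtain ⟨c, hc, hstrict⟩ := hω.hasStrictDerivAt_freePowerInverse ht hωE ha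
  rw [hc, ofReal_re]
  by_contra! hneg
  have := neBot_nhdsWithin_upperHalfPlane E
  have hsign := (hωE ▸ hω.tendsto_nhdsWithin E).eventually <|
    eventually_exists_pos_im_eq_mul hneg.ne hstrict (.of_forall (freePowerInverse_conj μ t))
  obtain ⟨z, ⟨θ, hθ, him⟩, hz⟩ := (hsign.and self_mem_nhdsWithin).exists
  rw [hω.freePowerInverse_apply_of_im_pos hz] at him
  have hωz := mul_pos_of_neg_of_neg hneg (neg_lt_zero.2 (hω.im_pos hz))
  nlinarith [mul_pos hθ hωz, show 0 < z.im from hz]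

lemma deriv_freePowerInverse_eq_zero (hω : IsSubordination μ t ω) (ht : t ≠ 1)
    (hωE : ω E = a) (ha : OffSupport μ a) (hfreq : ∃ᶠ E' : ℝ in 𝓝 E, 0 < (ω E').im) :
    deriv (freePowerInverse μ t) a = 0 := by
  obtain ⟨c, hc, hstrict⟩ := hω.hasStrictDerivAt_freePowerInverse ht hωE ha
  rw [hc, ofReal_eq_zero]
  by_contra hne
  have hsign := (hωE ▸ hω.continuous_comp_ofReal.tendsto E).eventually <|
    eventually_exists_pos_im_eq_mul hne hstrict (.of_forall (freePowerInverse_conj μ t))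
  obtain ⟨E', hpos, ⟨θ, hθ, him⟩, hoff⟩ :=
    (hfreq.and_eventually (hsign.and (hω.eventually_offSupport (hωE ▸ ha)))).exists
  rw [hω.freePowerInverse_apply ht hoff, ofReal_im, zero_eq_mul, mul_eq_zero] at him
  exact him.elim hθ.ne' (·.elim hne hpos.ne')

end IsSubordination

/-- At a cusp, where the second derivative of `φ` vanishes too, `φ' (w) = (w - a) ^ 2 k (w)` with
`k (a) < 0`, so that `ω` takes no real value `w ≠ a` near `a`. -/
lemma IsSubordination.eventually_im_pos_of_deriv_deriv_eq_zero {μ : Measure ℝ}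
    [IsProbabilityMeasure μ] {t : ℝ} {ω : ℂ → ℂ} {E a : ℝ} (hω : IsSubordination μ t ω)
    (ht : 1 < t) (hωE : ω E = a) (ha : OffSupport μ a)
    (hcrit : deriv (freePowerInverse μ t) a = 0)
    (hcusp : deriv (deriv (freePowerInverse μ t)) a = 0) :
    ∀ᶠ E' : ℝ in 𝓝[≠] E, 0 < (ω E').im := by
  have hm : mTr μ a ≠ 0 := hωE ▸ hω.mTr_ne_zero ht.ne' (hωE ▸ ha)
  obtain ⟨c, hc, hc3⟩ := deriv_deriv_deriv_freePowerInverse_neg ht ha hm hcrit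
  obtain ⟨k, hk, hka, hφk⟩ := exists_eq_add_sq_mul_of_deriv_eq_zero
    (ha.analyticAt_freePowerInverse t hm).deriv hcusp
  have hkneg : ∀ᶠ w in 𝓝 (a : ℂ), (k w).re < 0 := by
    refine (continuous_re.continuousAt.comp hk.continuousAt).eventually_lt_const ?_
    rw [Function.comp_apply, hka, hc3, div_ofNat_re, ofReal_re]
    linarith
  have hlim : Tendsto (fun E' : ℝ => ω E') (𝓝[≠] E) (𝓝 a) :=
    (hωE ▸ hω.continuous_comp_ofReal.tendsto E).mono_left nhdsWithin_le_nhds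
  filter_upwards [hlim.eventually hkneg, hlim.eventually ha.eventually, self_mem_nhdsWithin]
    with E' hneg hoff hE'
  refine (hω.im_nonneg E').lt_of_ne' fun him => ?_
  obtain ⟨x, hx⟩ : ∃ x : ℝ, ω E' = x := ⟨(ω E').re, Complex.ext rfl (by simpa using him)⟩
  have hxa : x ≠ a := by
    rintro rfl
    have hφ := hω.freePowerInverse_apply ht.ne' hoff
    rw [hx, ← hωE, hω.freePowerInverse_apply ht.ne' (hωE ▸ ha)] at hφ
    exact hE' (ofReal_injective hφ.symm)
  rw [hx] at hneg hoff
  have hnonneg := hω.re_deriv_freePowerInverse_nonneg ht.ne' hx hoff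
  rw [hφk, hcrit, zero_add, ← ofReal_sub, ← ofReal_pow, re_ofReal_mul] at hnonneg
  exact absurd hnonneg (mul_neg_of_pos_of_neg (by positivity) hneg).not_ge

/-! ### Square-root behaviour -/

lemma im_eq_sqrt_neg_of_sq_eq_ofReal {z : ℂ} {s : ℝ} (hsq : z ^ 2 = s) (him : 0 ≤ z.im) :
    z.im = √(-s) := by
  have hre := congr_arg re hsq
  have hmul := congr_arg im hsq
  simp only [sq, mul_re, mul_im, ofReal_re, ofReal_im] at hre hmul
  rcases mul_eq_zero.1 (show z.re * z.im = 0 by linarith) with h | h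
  · rw [← hre, h, zero_mul, zero_sub, neg_neg, Real.sqrt_mul_self him]
  · rw [← hre, h, mul_zero, sub_zero, Real.sqrt_eq_zero_of_nonpos (by nlinarith)]

namespace IsSubordination

variable {μ : Measure ℝ} [IsFiniteMeasure μ] [NeZero μ] {t : ℝ} {ω : ℂ → ℂ} {E a A : ℝ}

/-- Writing `φ = E + A ψ²` near `a`, the equation `φ (ω E') = E'` makes `ψ (ω E')` a square root of
`(E' - E) / A`. -/
lemma exists_analyticAt_sq_eq (hω : IsSubordination μ t ω) (ht : t ≠ 1) (hωE : ω E = a)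
    (ha : OffSupport μ a) (hcrit : deriv (freePowerInverse μ t) a = 0) (hA : A ≠ 0)
    (hderiv : deriv (deriv (freePowerInverse μ t)) a = 2 * A) :
    ∃ ψ : ℂ → ℂ, AnalyticAt ℂ ψ a ∧ ψ a = 0 ∧ deriv ψ a = 1 ∧
      ∀ᶠ E' : ℝ in 𝓝 E, ψ (ω E') ^ 2 = (A⁻¹ * (E' - E) : ℝ) ∧
        ∃ θ > (0 : ℝ), (ψ (ω E')).im = θ * (ω E').im := by
  have hlim : Tendsto (fun E' : ℝ => ω E') (𝓝 E) (𝓝 a) := hωE ▸ hω.continuous_comp_ofReal.tendsto E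
  obtain ⟨ψ, hψ, hψa, hψ', hψconj, hφψ⟩ := exists_eq_add_mul_sq hA
    (ha.analyticAt_freePowerInverse t (hωE ▸ hω.mTr_ne_zero ht (hωE ▸ ha)))
    (freePowerInverse_conj μ t) hcrit hderiv
  have hstrict : HasStrictDerivAt ψ ((1 : ℝ) : ℂ) a := by
    simpa only [hψ', ofReal_one] using hψ.hasStrictDerivAt
  refine ⟨ψ, hψ, hψa, hψ', ?_⟩
  filter_upwards [hω.eventually_offSupport (hωE ▸ ha),
    hlim.eventually (eventually_exists_pos_im_eq_mul one_ne_zero hstrict hψconj)]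
    with E' hoff hsign
  refine ⟨?_, by simpa only [one_mul] using hsign⟩
  have hφ := hφψ (ω E')
  rw [hω.freePowerInverse_apply ht hoff, ← hωE, hω.freePowerInverse_apply ht (hωE ▸ ha),
    ← sub_eq_iff_eq_add'] at hφ
  push_cast
  rw [hφ, inv_mul_cancel_left₀ (ofReal_ne_zero.2 hA)]

/-- With `ψ` as in `exists_analyticAt_sq_eq`, the Cauchy transform is `M₁ + M₂ ψ + O(ψ²)`. -/
lemma exists_isBigO_im_mTr_sub_sqrt (hω : IsSubordination μ t ω) (ht : t ≠ 1) (hωE : ω E = a)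
    (ha : OffSupport μ a) (hcrit : deriv (freePowerInverse μ t) a = 0) (hA : A ≠ 0)
    (hderiv : deriv (deriv (freePowerInverse μ t)) a = 2 * A) :
    (∃ b > 0, (fun E' : ℝ => (mTr μ (ω E')).im - b * √(-A⁻¹ * (E' - E))) =O[𝓝 E]
      fun E' => E' - E) ∧ ∀ᶠ E' : ℝ in 𝓝 E, -A⁻¹ * (E' - E) ≤ 0 → (ω E').im = 0 := by
  have hlim : Tendsto (fun E' : ℝ => ω E') (𝓝 E) (𝓝 a) := hωE ▸ hω.continuous_comp_ofReal.tendsto E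
  obtain ⟨ψ, hψ, hψa, hψ', hsq⟩ := hω.exists_analyticAt_sq_eq ht hωE ha hcrit hA hderiv
  have him : ∀ᶠ E' : ℝ in 𝓝 E, (ψ (ω E')).im = √(-A⁻¹ * (E' - E)) := by
    filter_upwards [hsq] with E' ⟨hE', θ, hθ, hψθ⟩
    rw [neg_mul]
    exact im_eq_sqrt_neg_of_sq_eq_ofReal hE' (hψθ ▸ mul_nonneg hθ.le (hω.im_nonneg E'))
  obtain ⟨b, hb, hbM⟩ := ha.invMoment_two_pos
  refine ⟨⟨b, hb, ?_⟩, ?_⟩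
  · have hexp := (isBigO_sub_sub_deriv_mul_sq ha.analyticAt_mTr hψ hψa hψ').comp_tendsto hlim
    have hsqO : (fun E' : ℝ => ψ (ω E') ^ 2) =O[𝓝 E] fun E' => E' - E := by
      refine Asymptotics.IsBigO.congr' (f₁ := fun E' : ℝ => ((A⁻¹ * (E' - E) : ℝ) : ℂ)) ?_
        (hsq.mono fun E' h => h.1.symm) .rfl
      exact isBigO_ofReal_left.2 (Asymptotics.isBigO_const_mul_self _ _ _)
    have himO : (fun E' : ℝ => (mTr μ (ω E') - mTr μ a - deriv (mTr μ) a * ψ (ω E')).im)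
        =O[𝓝 E] fun E' => E' - E :=
      (Asymptotics.isBigO_of_le _ fun E' => abs_im_le_norm _).trans (hexp.trans hsqO)
    refine himO.congr' ?_ .rfl
    filter_upwards [him] with E' hE'
    rw [ha.hasDerivAt_mTr.deriv, hbM, mTr_ofReal, sub_im, sub_im, im_ofReal_mul, ofReal_im,
      sub_zero, hE']
  · filter_upwards [him, hsq] with E' hE' hsqE' hle
    obtain ⟨-, θ, hθ, hψθ⟩ := hsqE'
    rw [Real.sqrt_eq_zero_of_nonpos hle, hψθ, mul_eq_zero] at hE'
    exact hE'.resolve_left hθ.ne'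

end IsSubordination

/-! ### Square-root edges -/

namespace IsFreePower

variable {μ ν : Measure ℝ} [IsFiniteMeasure μ] {t E : ℝ} {ω : ℂ → ℂ} {ρ : ℝ → ENNReal}

lemma density_eq_zero (hν : IsFreePower μ t ω ν) (hω : IsSubordination μ t ω)
    (hρc : Continuous ρ) (hρ : ν.rnDeriv volume =ᵐ[volume] ρ) (hE : OffSupport μ (ω E))
    (him : (ω E).im = 0) : ρ E = 0 := by
  rw [hν.density_eq hω hρc hρ hE, hE.im_mTr, him, zero_mul, zero_div, ENNReal.ofReal_zero]

variable [NeZero μ]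

lemma density_pos_and_lt_top_iff (hν : IsFreePower μ t ω ν) (hω : IsSubordination μ t ω)
    (hρc : Continuous ρ) (hρ : ν.rnDeriv volume =ᵐ[volume] ρ) (hE : OffSupport μ (ω E)) :
    0 < ρ E ∧ ρ E < ⊤ ↔ 0 < (ω E).im := by
  rw [hν.density_eq hω hρc hρ hE, ENNReal.ofReal_pos, hE.im_mTr,
    div_pos_iff_of_pos_right Real.pi_pos, mul_pos_iff_of_pos_right hE.Inu_pos]
  exact and_iff_left ENNReal.ofReal_lt_top

lemma toReal_density (hν : IsFreePower μ t ω ν) (hω : IsSubordination μ t ω)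
    (hρc : Continuous ρ) (hρ : ν.rnDeriv volume =ᵐ[volume] ρ) (hE : OffSupport μ (ω E)) :
    (ρ E).toReal = (mTr μ (ω E)).im / Real.pi := by
  have hnonneg : 0 ≤ (mTr μ (ω E)).im :=
    hE.im_mTr ▸ mul_nonneg (hω.im_nonneg E) hE.Inu_pos.le
  rw [hν.density_eq hω hρc hρ hE, ENNReal.toReal_ofReal (div_nonneg hnonneg Real.pi_pos.le)]

end IsFreePower

lemma not_eventually_mem_of_exterior {S : Set ℝ} {x : ℝ}
    (hext : ∃ ε₀ > (0 : ℝ), ∀ ε : ℝ, 0 < ε → ε < ε₀ → x - ε ∉ closure S ∨ x + ε ∉ closure S) :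
    ¬∀ᶠ y in 𝓝[≠] x, y ∈ S := by
  intro hS
  obtain ⟨ε₀, hε₀, hext⟩ := hext
  obtain ⟨δ, hδ, hball⟩ := Metric.mem_nhdsWithin_iff.1 hS
  obtain ⟨ε, hε, hεlt⟩ := exists_between (lt_min hε₀ hδ)
  have hmem : ∀ s : ℝ, |s| = ε → x + s ∈ closure S := fun s hs => by
    refine subset_closure (hball ⟨?_, ?_⟩)
    · rw [Metric.mem_ball, Real.dist_eq, add_sub_cancel_left, hs]
      exact hεlt.trans_le (min_le_right _ _)
    · simpa [← abs_pos, hs] using hε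
  rcases hext ε hε (hεlt.trans_le (min_le_left _ _)) with h | h
  · exact h (sub_eq_add_neg x ε ▸ hmem (-ε) (by rw [abs_neg, abs_of_pos hε]))
  · exact h (hmem ε (abs_of_pos hε))

lemma exists_sqrt_edge_of_isBigO {ρ : ℝ → ENNReal} {x b κ : ℝ} (hb : 0 < b) (hκ : κ ≠ 0)
    (hsqrt : (fun E => (ρ E).toReal - b * √(κ * (E - x))) =O[𝓝 x] fun E => E - x)
    (hzero : ∀ᶠ E in 𝓝 x, κ * (E - x) ≤ 0 → ρ E = 0) :
    ∃ S > (0 : ℝ), ∃ K > (0 : ℝ), ∃ δ > (0 : ℝ),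
      ((∀ E ∈ Set.Ioo x (x + δ), |(ρ E).toReal - S * Real.sqrt (E - x)| ≤ K * (E - x)) ∧
        ∀ E ∈ Set.Ioc (x - δ) x, ρ E = 0) ∨
      ((∀ E ∈ Set.Ioo (x - δ) x, |(ρ E).toReal - S * Real.sqrt (x - E)| ≤ K * (x - E)) ∧
        ∀ E ∈ Set.Ico x (x + δ), ρ E = 0) := by
  obtain ⟨K, hK, hbound⟩ := hsqrt.exists_pos
  obtain ⟨δ, hδ, hball⟩ := Metric.eventually_nhds_iff_ball.1 (hbound.bound.and hzero)
  simp only [Real.norm_eq_abs, Real.ball_eq_Ioo] at hball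
  refine ⟨b * √|κ|, by positivity, K, hK, δ, hδ, ?_⟩
  rcases hκ.lt_or_gt with hneg | hpos
  · refine .inr ⟨fun E hE => ?_, fun E hE => (hball E ⟨by linarith [hE.1], hE.2⟩).2
      (mul_nonpos_of_nonpos_of_nonneg hneg.le (sub_nonneg.2 hE.1))⟩
    have hEδ := (hball E ⟨hE.1, by linarith [hE.2]⟩).1
    rwa [abs_of_neg (sub_neg.2 hE.2), neg_sub, ← neg_sub x E, mul_neg, ← neg_mul,
      ← abs_of_neg hneg, Real.sqrt_mul (abs_nonneg κ), ← mul_assoc] at hEδ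
  · refine .inl ⟨fun E hE => ?_, fun E hE => (hball E ⟨hE.1, by linarith [hE.2]⟩).2
      (mul_nonpos_of_nonneg_of_nonpos hpos.le (sub_nonpos.2 hE.2))⟩
    have hEδ := (hball E ⟨by linarith [hE.1], hE.2⟩).1
    rwa [abs_of_pos (sub_pos.2 hE.1), ← abs_of_pos hpos, Real.sqrt_mul (abs_nonneg κ),
      ← mul_assoc] at hEδ

lemma IsSubordination.exists_critical_point {μ : Measure ℝ} [IsProbabilityMeasure μ] {t E : ℝ}
    {ω : ℂ → ℂ} (hω : IsSubordination μ t ω) (ht : 1 < t) (hE : OffSupport μ (ω E))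
    (hpos : ∃ᶠ E' : ℝ in 𝓝 E, 0 < (ω E').im) (hzero : ∃ᶠ E' : ℝ in 𝓝 E, (ω E').im = 0)
    (hedge : ¬∀ᶠ E' : ℝ in 𝓝[≠] E, 0 < (ω E').im) :
    ∃ a A : ℝ, ω E = a ∧ deriv (freePowerInverse μ t) a = 0 ∧ A ≠ 0 ∧
      deriv (deriv (freePowerInverse μ t)) a = 2 * A := by
  obtain ⟨a, ha⟩ : ∃ a : ℝ, ω E = a :=
    ⟨(ω E).re, Complex.ext rfl (by simpa using hω.im_eq_zero_of_frequently hzero)⟩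
  have hcrit := hω.deriv_freePowerInverse_eq_zero ht.ne' ha (ha ▸ hE) hpos
  obtain ⟨c, hc⟩ := exists_ofReal_eq_of_forall_conj
    (deriv_conj_of_forall_conj (deriv_conj_of_forall_conj (freePowerInverse_conj μ t))) a
  refine ⟨a, c / 2, ha, hcrit, fun h => hedge ?_, by rw [hc]; push_cast; ring⟩
  refine hω.eventually_im_pos_of_deriv_deriv_eq_zero ht ha (ha ▸ hE) hcrit ?_
  rw [hc, (div_eq_zero_iff.1 h).resolve_right two_ne_zero, ofReal_zero]

theorem statement11_general (μ : Measure ℝ) [IsProbabilityMeasure μ] (hμ : HasThickSupport μ)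
    (t : ℝ) (ht : 1 < t)
    (ωt : ℂ → ℂ) (hsub : IsSubordination μ t ωt)
    (νt : Measure ℝ) (hν : IsFreePower μ t ωt νt)
    (ρt : ℝ → ENNReal) (hcont : Continuous ρt)
    (hρ : νt.rnDeriv volume =ᵐ[volume] ρt)
    (Et : ℝ)
    (hEt : Et ∈ frontier {E : ℝ | 0 < ρt E ∧ ρt E < ⊤})
    (hext : ∃ ε₀ > (0 : ℝ), ∀ ε : ℝ, 0 < ε → ε < ε₀ →
      Et - ε ∉ closure {E : ℝ | 0 < ρt E} ∨ Et + ε ∉ closure {E : ℝ | 0 < ρt E})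
    (hatom : ¬ ENNReal.ofReal (1 - 1 / t) ≤ μ {Et / t}) :
    ∃ S > (0 : ℝ), ∃ K > (0 : ℝ), ∃ δ > (0 : ℝ),
      ((∀ E ∈ Set.Ioo Et (Et + δ),
          |(ρt E).toReal - S * Real.sqrt (E - Et)| ≤ K * (E - Et)) ∧
        ∀ E ∈ Set.Ioc (Et - δ) Et, ρt E = 0) ∨
      ((∀ E ∈ Set.Ioo (Et - δ) Et,
          |(ρt E).toReal - S * Real.sqrt (Et - E)| ≤ K * (Et - E)) ∧
        ∀ E ∈ Set.Ico Et (Et + δ), ρt E = 0) := by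
  have hoff : OffSupport μ (ωt Et) := hsub.offSupport_ofReal hμ ht <| by
    rwa [ENNReal.ofReal_le_iff_le_toReal (measure_ne_top _ _), not_le] at hatom
  have hoffs := hsub.eventually_offSupport hoff
  have hiff : ∀ᶠ E in 𝓝 Et, 0 < ρt E ∧ ρt E < ⊤ ↔ 0 < (ωt E).im :=
    hoffs.mono fun E hE => hν.density_pos_and_lt_top_iff hsub hcont hρ hE
  rw [frontier_eq_closure_inter_closure, mem_inter_iff, mem_closure_iff_frequently,
    mem_closure_iff_frequently] at hEt
  have hpos : ∃ᶠ E : ℝ in 𝓝 Et, 0 < (ωt E).im :=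
    hEt.1.mp (hiff.mono fun E h => h.1)
  have hzero : ∃ᶠ E : ℝ in 𝓝 Et, (ωt E).im = 0 :=
    hEt.2.mp (hiff.mono fun E h hE => (hsub.im_nonneg E).eq_of_not_lt' (mt h.2 hE))
  have hedge : ¬∀ᶠ E : ℝ in 𝓝[≠] Et, 0 < (ωt E).im := fun h =>
    not_eventually_mem_of_exterior hext <|
      (h.and (hiff.filter_mono nhdsWithin_le_nhds)).mono fun E hE => (hE.2.2 hE.1).1
  obtain ⟨a, A, ha, hcrit, hA, hderiv⟩ := hsub.exists_critical_point ht hoff hpos hzero hedge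
  obtain ⟨⟨b, hb, hsqrt⟩, hreal⟩ :=
    hsub.exists_isBigO_im_mTr_sub_sqrt ht.ne' ha (ha ▸ hoff) hcrit hA hderiv
  refine exists_sqrt_edge_of_isBigO (div_pos hb Real.pi_pos) (neg_ne_zero.2 (inv_ne_zero hA))
    ((hsqrt.const_mul_left Real.pi⁻¹).congr' ?_ .rfl) ?_
  · filter_upwards [hoffs] with E hE
    rw [hν.toReal_density hsub hcont hρ hE]
    ring
  · filter_upwards [hoffs, hreal] with E hE h hle
      using hν.density_eq_zero hsub hcont hρ hE (h hle)

/-- Theorem 2.2, first part: square-root decay of the density `ρ_t` of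
`μ^{⊞t}` at any exterior point `E_t` of `𝒱_t` such that `E_t/t` is not an atom of `μ`
of mass `≥ 1 − 1/t`. -/
theorem statement11 (μ : Measure ℝ) (d : JacobiData μ)
    (t : ℝ) (ht : 1 < t)
    (ωt : ℂ → ℂ) (hsub : IsSubordination μ t ωt)
    (νt : Measure ℝ) (hν : IsFreePower μ t ωt νt)
    (ρt : ℝ → ENNReal) (hcont : Continuous ρt)
    (hρ : νt.rnDeriv volume =ᵐ[volume] ρt)
    (Et : ℝ)
    (hEt : Et ∈ frontier {E : ℝ | 0 < ρt E ∧ ρt E < ⊤})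
    (hext : ∃ ε₀ > (0 : ℝ), ∀ ε : ℝ, 0 < ε → ε < ε₀ →
      Et - ε ∉ closure {E : ℝ | 0 < ρt E} ∨ Et + ε ∉ closure {E : ℝ | 0 < ρt E})
    (hatom : ¬ ENNReal.ofReal (1 - 1 / t) ≤ μ {Et / t}) :
    ∃ S > (0 : ℝ), ∃ K > (0 : ℝ), ∃ δ > (0 : ℝ),
      ((∀ E ∈ Set.Ioo Et (Et + δ),
          |(ρt E).toReal - S * Real.sqrt (E - Et)| ≤ K * (E - Et)) ∧
        ∀ E ∈ Set.Ioc (Et - δ) Et, ρt E = 0) ∨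
      ((∀ E ∈ Set.Ioo (Et - δ) Et,
          |(ρt E).toReal - S * Real.sqrt (Et - E)| ≤ K * (Et - E)) ∧
        ∀ E ∈ Set.Ico Et (Et + δ), ρt E = 0) := by
  have := d.prob
  exact statement11_general μ d.hasThickSupport t ht ωt hsub νt hν ρt hcont hρ Et hEt hext
    hatom

end
end
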